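/- arXiv:2301.11352 — 2 statements merged into one kernel-verified Lean document; each statement's English description precedes it below -/
import Mathlib

section
/- Let $d\geq 5$. For integers $j\geq 0$ let $q_j=\mathrm{lcm}\{1,2,\dots,2^j\}$ and for integers $j,k$ with $2^j\le k$ let $\Omega_{j,k}=\{\alpha\in\mathbb{T}^d:\alpha\in[-2^{j-k},2^{j-k}]^d+(q_j^{-1}\mathbb{Z})^d\}$. Then there is a constant $C_d$ such that for every $k\in\mathbb{N}$, every integer $j$ with $1\le j\le\log_2(k)-2$, and every $f\in\ell^2(\mathbb{Z}^d)$ whose Fourier transform is supported in the complement $\Omega_{j,k}^c$, one has $\bigl\|\sup_{2^k\le\lambda\le 2^{k+1},\ \lambda^2\in\mathbb{N}}|A_\lambda f|\bigr\|_{\ell^2(\mathbb{Z}^d)}\le C_d\,2^{-j/2}j^{-1}\,\|f\|_{\ell^2(\mathbb{Z}^d)}$. -/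
open scoped BigOperators ENNReal Real

noncomputable section

/-- Squared Euclidean norm of a lattice point, as a real number. -/
def nsq {d : ℕ} (m : Fin d → ℤ) : ℝ := ∑ i, ((m i : ℝ)) ^ 2

/-- The discrete sphere of radius `lam` in `ℤ^d`. -/
def sph (d : ℕ) (lam : ℝ) : Set (Fin d → ℤ) := {m | nsq m = lam ^ 2}

/-- `N_lam`: the number of lattice points on the sphere of radius `lam`. -/
def Nlam (d : ℕ) (lam : ℝ) : ℕ := Nat.card (sph d lam)

/-- The discrete spherical average. -/
def Avg {d : ℕ} (lam : ℝ) (f : (Fin d → ℤ) → ℝ) (n : Fin d → ℤ) : ℝ :=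
  (Nlam d lam : ℝ)⁻¹ * ∑' m : sph d lam, f (n - (m : Fin d → ℤ))

/-- The `ℓ²(ℤ^d)` norm, valued in `ℝ≥0∞`. -/
def l2norm {d : ℕ} (f : (Fin d → ℤ) → ℝ) : ℝ≥0∞ :=
  (∑' n : Fin d → ℤ, (‖f n‖₊ : ℝ≥0∞) ^ 2) ^ ((1 : ℝ) / 2)

/-- `q_j = lcm{1,2,…,2^j}`. -/
def qlcm (j : ℕ) : ℕ := (Finset.Icc 1 (2 ^ j)).lcm id

/-- `Ω_{j,k} = [-2^{j-k}, 2^{j-k}]^d + (q_j⁻¹ ℤ)^d`, viewed as the (ℤ^d-periodic)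
set of representatives in `ℝ^d` of the corresponding subset of `𝕋^d`. -/
def OmegaJK (d j k : ℕ) : Set (Fin d → ℝ) :=
  {α | ∃ ℓ : Fin d → ℤ, ∀ i, |α i - (ℓ i : ℝ) / (qlcm j : ℝ)| ≤ (2 : ℝ) ^ ((j : ℤ) - (k : ℤ))}

def chiA : ArithmeticFunction ℤ := ⟨fun n => ZMod.χ₄ (n : ZMod 4), by simp⟩

def f2 : ArithmeticFunction ℤ := chiA * (ArithmeticFunction.zeta : ArithmeticFunction ℤ)

lemma chiA_mult : chiA.IsMultiplicative := by
  refine ⟨by simp [chiA], ?_⟩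
  intro m n _
  show ZMod.χ₄ ((m * n : ℕ) : ZMod 4) = ZMod.χ₄ (m : ZMod 4) * ZMod.χ₄ (n : ZMod 4)
  rw [Nat.cast_mul, map_mul]

lemma f2_mult : f2.IsMultiplicative :=
  chiA_mult.mul ArithmeticFunction.isMultiplicative_zeta.natCast

lemma f2_apply (n : ℕ) : f2 n = ∑ d ∈ n.divisors, ZMod.χ₄ (d : ZMod 4) := by
  rw [f2, ArithmeticFunction.coe_mul_zeta_apply]; rfl

lemma f2_prime_pow {p : ℕ} (hp : p.Prime) (e : ℕ) :
    f2 (p ^ e) = ∑ i ∈ Finset.range (e + 1), (ZMod.χ₄ (p : ZMod 4)) ^ i := by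
  rw [f2_apply, Nat.sum_divisors_prime_pow hp]
  refine Finset.sum_congr rfl fun i _ => ?_
  rw [Nat.cast_pow, map_pow]

abbrev G2 (v : ℕ) := {z : GaussianInt // z.norm = (v : ℤ)}

instance G2_finite (v : ℕ) : Finite (G2 v) := by
  let g : G2 v → (Set.Icc (-(v:ℤ)) v) × (Set.Icc (-(v:ℤ)) v) := fun z =>
    (⟨z.1.re, by
      have := z.2; simp only [Zsqrtd.norm_def] at this
      constructor <;> nlinarith [sq_nonneg z.1.re, sq_nonneg z.1.im, sq_nonneg (z.1.re+1), sq_nonneg (z.1.re-1)]⟩,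
     ⟨z.1.im, by
      have := z.2; simp only [Zsqrtd.norm_def] at this
      constructor <;> nlinarith [sq_nonneg z.1.re, sq_nonneg z.1.im, sq_nonneg (z.1.im+1), sq_nonneg (z.1.im-1)]⟩)
  apply Finite.of_injective g
  intro a b h
  simp only [g, Prod.mk.injEq] at h
  ext
  · exact congrArg Subtype.val h.1
  · exact congrArg Subtype.val h.2

lemma G2_norm_pow (a : GaussianInt) (n : ℕ) : Zsqrtd.norm (a^n) = (Zsqrtd.norm a)^n := by
  induction n with
  | zero => simp
  | succ n ih => rw [pow_succ, Zsqrtd.norm_mul, ih, pow_succ]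

lemma norm_star_G (a : GaussianInt) : Zsqrtd.norm (star a) = Zsqrtd.norm a := by
  simp [Zsqrtd.norm_def]

lemma G_prime_of_norm {p : ℕ} (hp : p.Prime) {a : GaussianInt} (ha : a.norm = p) : Prime a := by
  apply Irreducible.prime
  have hunit : ∀ b : GaussianInt, IsUnit b ↔ b.norm.natAbs = 1 := fun b => Zsqrtd.norm_eq_one_iff.symm
  refine ⟨?_, ?_⟩
  · rw [hunit, ha]; simpa using hp.one_lt.ne'
  · intro b c hbc
    rw [hunit, hunit]
    have : b.norm.natAbs * c.norm.natAbs = p := by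
      rw [← Int.natAbs_mul, ← Zsqrtd.norm_mul, ← hbc, ha]; simp
    rcases (Nat.dvd_prime hp).1 (Dvd.intro _ this) with h | h
    · left; exact h
    · right
      rw [h] at this
      exact Nat.eq_of_mul_eq_mul_left hp.pos (by simpa using this)

lemma G_dvd_norm {a b : GaussianInt} (h : a ∣ b) : a.norm ∣ b.norm := by
  obtain ⟨c, rfl⟩ := h
  rw [Zsqrtd.norm_mul]; exact Dvd.intro _ rfl

lemma G2_card_one_mod {p : ℕ} (hp : p.Prime) (h1 : p % 4 = 1) (e w : ℕ) (hw : ¬ p ∣ w) :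
    (e + 1) * Nat.card (G2 w) ≤ Nat.card (G2 (p ^ e * w)) := by
  have := Fact.mk hp
  obtain ⟨a, b, hab⟩ := Nat.Prime.sq_add_sq (p := p) (by omega)
  let P : GaussianInt := ⟨a, b⟩
  have hP : P.norm = p := by
    rw [← hab]; simp [P, Zsqrtd.norm_def]; ring
  have hPp := G_prime_of_norm hp hP
  have hPs : (star P).norm = p := by rw [norm_star_G, hP]
  have hP0 : P ≠ 0 := hPp.ne_zero
  have hPs0 : star P ≠ 0 := (G_prime_of_norm hp hPs).ne_zero
  have hndvd : ¬ P ∣ star P := by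
    intro h
    have h2 : P ∣ P + star P := dvd_add dvd_rfl h
    have h3 := G_dvd_norm h2
    rw [hP] at h3
    have h4 : (P + star P).norm = 4 * (a:ℤ)^2 := by
      simp [P, Zsqrtd.norm_def]; ring
    rw [h4] at h3
    have h5 : p ∣ 4 * a ^ 2 := by exact_mod_cast h3
    rcases (Nat.Prime.dvd_mul hp).1 h5 with h6 | h6
    · have : p ≤ 4 := Nat.le_of_dvd (by norm_num) h6
      interval_cases p <;> omega
    · have h7 := hp.dvd_of_dvd_pow h6
      have h8 : p ∣ b ^ 2 := by
        rw [← hab] at h6 ⊢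
        exact (Nat.dvd_add_right h6).1 dvd_rfl
      have h9 := hp.dvd_of_dvd_pow h8
      obtain ⟨x, rfl⟩ := h7
      obtain ⟨y, rfl⟩ := h9
      have h10 : p * (p * (x^2 + y^2)) = p * 1 := by nlinarith
      have h11 := Nat.eq_of_mul_eq_mul_left hp.pos h10
      have := Nat.eq_one_of_mul_eq_one_right h11
      exact hp.one_lt.ne' this
  have key : ∀ (z z' : G2 w) (i j : ℕ), i < j → j ≤ e →
      z.1 * P ^ i * (star P) ^ (e - i) ≠ z'.1 * P ^ j * (star P) ^ (e - j) := by
    intro z z' i j hij hj h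
    have e1 : (star P) ^ (e - i) = (star P)^(j - i) * (star P) ^ (e - j) := by
      rw [← pow_add]; congr 1; omega
    have e2 : P ^ j = P ^ i * P ^ (j - i) := by
      rw [← pow_add]; congr 1; omega
    rw [e1, e2] at h
    have h' : (P ^ i * (star P) ^ (e - j)) * (z.1 * (star P)^(j-i)) =
      (P ^ i * (star P) ^ (e - j)) * (z'.1 * P^(j-i)) := by linear_combination h
    have h2 := mul_left_cancel₀ (mul_ne_zero (pow_ne_zero _ hP0) (pow_ne_zero _ hPs0)) h'
    have h3 : P ∣ z.1 * (star P)^(j-i) := by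
      rw [h2]; exact Dvd.dvd.mul_left (dvd_pow_self _ (by omega)) _
    rcases hPp.dvd_or_dvd h3 with h4 | h4
    · have := G_dvd_norm h4
      rw [hP, z.2] at this
      exact hw (by exact_mod_cast this)
    · exact hndvd (hPp.dvd_of_dvd_pow h4)
  let g : Fin (e+1) × G2 w → G2 (p^e * w) := fun x =>
    ⟨x.2.1 * P ^ (x.1:ℕ) * (star P) ^ (e - x.1), by
      rw [Zsqrtd.norm_mul, Zsqrtd.norm_mul, G2_norm_pow, G2_norm_pow, hP, hPs, x.2.2, mul_assoc, ← pow_add]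
      have : (x.1:ℕ) + (e - x.1) = e := by have := x.1.2; omega
      rw [this]; push_cast; ring⟩
  have hg : Function.Injective g := by
    rintro ⟨i, z⟩ ⟨j, z'⟩ h
    simp only [g, Subtype.mk.injEq] at h
    rcases lt_trichotomy (i:ℕ) (j:ℕ) with hij | hij | hij
    · exact absurd h (key z z' i j hij (by have := j.2; omega))
    · have hij' : i = j := Fin.ext hij
      subst hij'
      have h2 := mul_right_cancel₀ (pow_ne_zero _ hPs0) h
      have h3 := mul_right_cancel₀ (pow_ne_zero _ hP0) h2
      rw [Subtype.ext h3]
    · exact absurd h.symm (key z' z j i hij (by have := i.2; omega))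
  have := Nat.card_le_card_of_injective g hg
  simpa [Nat.card_prod] using this

lemma G2_card_sq (p e w : ℕ) (hp : p ≠ 0) :
    Nat.card (G2 w) ≤ Nat.card (G2 (p ^ (2 * e) * w)) := by
  let g : G2 w → G2 (p^(2*e) * w) := fun z => ⟨(p:GaussianInt)^e * z.1, by
    rw [Zsqrtd.norm_mul, G2_norm_pow, z.2]
    simp [Zsqrtd.norm_natCast]; left; ring⟩
  apply Nat.card_le_card_of_injective g
  intro a b h
  simp only [g, Subtype.mk.injEq] at h
  exact Subtype.ext (mul_left_cancel₀ (pow_ne_zero _ (by exact_mod_cast hp)) h)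

lemma G2_one : 4 ≤ Nat.card (G2 1) := by
  let g : Fin 4 → G2 1 := ![⟨⟨1,0⟩, by decide⟩, ⟨⟨-1,0⟩, by decide⟩, ⟨⟨0,1⟩, by decide⟩, ⟨⟨0,-1⟩, by decide⟩]
  have := Nat.card_le_card_of_injective g (by
    intro a b h
    fin_cases a <;> fin_cases b <;> simp [g] at h ⊢)
  simpa using this

lemma G2_lower (v : ℕ) (hv : Odd v) : 0 ≤ f2 v ∧ 4 * f2 v ≤ (Nat.card (G2 v) : ℤ) := by
  induction v using Nat.strong_induction_on with
  | _ v ih =>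
  by_cases h1 : v = 1
  · subst h1
    have := G2_one
    rw [f2_mult.1]
    constructor
    · norm_num
    · exact_mod_cast this
  have hv0 : v ≠ 0 := by rintro rfl; simp at hv
  have hp := Nat.minFac_prime h1
  set p := v.minFac with hpd
  obtain ⟨e, w, hw, hvw⟩ := Nat.exists_eq_pow_mul_and_not_dvd hv0 p hp.ne_one
  have hpodd : Odd p := hv.of_dvd_nat (Nat.minFac_dvd v)
  have he : e ≠ 0 := by
    rintro rfl
    simp at hvw
    exact hw (hvw ▸ Nat.minFac_dvd v)
  have hw0 : 0 < w := by
    rcases Nat.eq_zero_or_pos w with h | h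
    · subst h; simp at hw
    · exact h
  have hlt : w < v := by
    rw [hvw]
    have : 1 < p ^ e := Nat.one_lt_pow he hp.one_lt
    nlinarith
  have hwodd : Odd w := hv.of_dvd_nat (hvw ▸ Dvd.intro_left _ rfl)
  obtain ⟨i1, i2⟩ := ih w hlt hwodd
  have hcop : Nat.Coprime (p^e) w := Nat.Coprime.pow_left _ ((Nat.Prime.coprime_iff_not_dvd hp).2 hw)
  have hf : f2 v = f2 (p^e) * f2 w := by
    conv_lhs => rw [hvw]
    exact f2_mult.2 hcop
  rw [hf, f2_prime_pow hp]
  have hmod : p % 4 = 1 ∨ p % 4 = 3 := by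
    obtain ⟨t, ht⟩ := hpodd; omega
  rcases hmod with hm | hm
  · rw [ZMod.χ₄_nat_one_mod_four hm]
    have := G2_card_one_mod hp hm e w hw
    rw [← hvw] at this
    simp only [one_pow, Finset.sum_const, Finset.card_range, nsmul_eq_mul, mul_one]
    constructor
    · positivity
    · have h2 : (((e + 1) * Nat.card (G2 w) : ℕ) : ℤ) ≤ (Nat.card (G2 v) : ℤ) := by exact_mod_cast this
      push_cast at h2 ⊢
      nlinarith
  · rw [ZMod.χ₄_nat_three_mod_four hm, neg_one_geom_sum]
    split_ifs with hev
    · simp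
    · have : Even e := by
        rcases Nat.even_or_odd e with h | h
        · exact h
        · exact absurd (h.add_one) hev
      obtain ⟨t, ht⟩ := this
      have h2 := G2_card_sq p t w hp.ne_zero
      rw [show 2 * t = e by omega, ← hvw] at h2
      constructor
      · simpa using i1
      · have : (Nat.card (G2 w) : ℤ) ≤ (Nat.card (G2 v) : ℤ) := by exact_mod_cast h2
        linarith

def sg (y : ℤ) : ℤ := if y % 2 = 0 then 1 else -1

open Classical in
noncomputable def TT (u : ℤ) : Finset (ℤ × ℤ × ℤ × ℤ) :=
  ((Finset.Icc (-u) u) ×ˢ (Finset.Icc (-u) u) ×ˢ (Finset.Icc (-u) u) ×ˢ (Finset.Icc (-u) u)).filter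
    (fun p => p.1 * p.2.2.1 + p.2.1 * p.2.2.2 = u ∧ |p.2.1| < p.1 ∧ |p.2.2.2| < p.2.2.1 ∧
      (p.1 + p.2.1) % 2 = 1 ∧ (p.2.2.1 + p.2.2.2) % 2 = 1)

lemma mem_TT {u x y z t : ℤ} : (x, y, z, t) ∈ TT u ↔ (x * z + y * t = u ∧ |y| < x ∧ |t| < z ∧
      (x + y) % 2 = 1 ∧ (z + t) % 2 = 1) := by
  simp only [TT, Finset.mem_filter, Finset.mem_product, Finset.mem_Icc, and_iff_right_iff_imp]
  rintro ⟨h1, h2, h3, -, -⟩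
  rw [abs_lt] at h2 h3
  have k1 : 0 ≤ (x - 1 - y) * (z - 1 + t) := mul_nonneg (by linarith) (by linarith)
  have k2 : 0 ≤ (x - 1 + y) * (z - 1 - t) := mul_nonneg (by linarith) (by linarith)
  have k : x + z - 1 ≤ u := by nlinarith
  refine ⟨⟨?_, ?_⟩, ⟨?_, ?_⟩, ⟨?_, ?_⟩, ⟨?_, ?_⟩⟩ <;> linarith

lemma nu_spec {x y : ℤ} (hy : 0 < y) (hyx : y < x) (hpar : (x + y) % 2 = 1) :
    1 ≤ (x + y) / (2 * y) ∧ |x - 2 * ((x + y) / (2 * y)) * y| < y := by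
  have h1 := Int.emod_add_mul_ediv (x + y) (2 * y)
  have h2 := Int.emod_nonneg (x + y) (show 2 * y ≠ 0 by omega)
  have h3 := Int.emod_lt_of_pos (x + y) (show 0 < 2 * y by omega)
  set v := (x + y) / (2 * y)
  set r := (x + y) % (2 * y)
  have h4 : x - 2 * v * y = r - y := by linarith
  have hr : r ≠ 0 := by
    intro h
    rw [h] at h1
    have : x + y = 2 * (y * v) := by linarith
    omega
  constructor
  · by_contra hc
    have : v ≤ 0 := by omega
    nlinarith
  · rw [h4, abs_lt]; omega

lemma nu_unique {x y v : ℤ} (hy : 0 < y) (h : |x - 2 * v * y| < y) : (x + y) / (2 * y) = v := by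
  rw [abs_lt] at h
  rw [Int.ediv_eq_iff_of_pos (by omega)]
  constructor <;> linarith

def invo (p : ℤ × ℤ × ℤ × ℤ) : ℤ × ℤ × ℤ × ℤ :=
  let v := (p.1 + p.2.1) / (2 * p.2.1)
  (2 * v * p.2.2.1 + p.2.2.2, p.2.2.1, p.2.1, p.1 - 2 * v * p.2.1)

lemma invo_mem {u : ℤ} {p : ℤ × ℤ × ℤ × ℤ} (hp : p ∈ (TT u).filter (fun p => 0 < p.2.1)) :
    invo p ∈ (TT u).filter (fun p => 0 < p.2.1) := by
  obtain ⟨x, y, z, t⟩ := p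
  simp only [Finset.mem_filter, mem_TT] at hp
  obtain ⟨⟨h1, h2, h3, h4, h5⟩, hy⟩ := hp
  obtain ⟨n1, n2⟩ := nu_spec hy (by rwa [abs_of_pos hy] at h2) h4
  simp only [invo, Finset.mem_filter, mem_TT]
  set v := (x + y) / (2 * y)
  have hz : 0 < z := lt_of_le_of_lt (abs_nonneg _) h3
  refine ⟨⟨?_, ?_, n2, ?_, ?_⟩, hz⟩
  · rw [← h1]; ring
  · rw [abs_of_pos hz]; rw [abs_lt] at h3; nlinarith
  · have : 2 * v * z + t + z = 2 * (v * z) + (z + t) := by ring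
    rw [this]; omega
  · have : y + (x - 2 * v * y) = (x + y) - 2 * (v * y) := by ring
    rw [this]; omega

lemma invo_invo {u : ℤ} {p : ℤ × ℤ × ℤ × ℤ} (hp : p ∈ (TT u).filter (fun p => 0 < p.2.1)) :
    invo (invo p) = p := by
  obtain ⟨x, y, z, t⟩ := p
  simp only [Finset.mem_filter, mem_TT] at hp
  obtain ⟨⟨h1, h2, h3, h4, h5⟩, hy⟩ := hp
  have hz : 0 < z := lt_of_le_of_lt (abs_nonneg _) h3
  simp only [invo]
  set v := (x + y) / (2 * y)
  have : (2 * v * z + t + z) / (2 * z) = v := by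
    apply nu_unique hz
    convert h3 using 2; ring
  rw [this]
  ext <;> simp

lemma sg_invo {u : ℤ} (hu : u % 2 = 1) {p : ℤ × ℤ × ℤ × ℤ}
    (hp : p ∈ (TT u).filter (fun p => 0 < p.2.1)) : sg p.2.1 + sg (invo p).2.1 = 0 := by
  obtain ⟨x, y, z, t⟩ := p
  simp only [Finset.mem_filter, mem_TT] at hp
  obtain ⟨⟨h1, h2, h3, h4, h5⟩, hy⟩ := hp
  simp only [invo]
  have hx : ∃ a, x = 2 * a + 1 - y := ⟨(x + y) / 2, by omega⟩
  have ht : ∃ b, t = 2 * b + 1 - z := ⟨(z + t) / 2, by omega⟩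
  obtain ⟨a, rfl⟩ := hx
  obtain ⟨b, rfl⟩ := ht
  have : u = 2 * (a * z + b * y - y * z) + (y + z) := by rw [← h1]; ring
  have : (y + z) % 2 = 1 := by omega
  unfold sg
  split_ifs <;> omega

lemma sum_TT_pos {u : ℤ} (hu : u % 2 = 1) :
    ∑ p ∈ (TT u).filter (fun p => 0 < p.2.1), sg p.2.1 = 0 := by
  apply Finset.sum_involution (fun p _ => invo p)
  · intro p hp; exact sg_invo hu hp
  · intro p hp h he
    have := sg_invo hu hp
    rw [he] at this
    omega
  · intro p hp; exact invo_mem hp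
  · intro p hp; exact invo_invo hp

lemma sum_TT_neg {u : ℤ} (hu : u % 2 = 1) :
    ∑ p ∈ (TT u).filter (fun p => p.2.1 < 0), sg p.2.1 = 0 := by
  refine Eq.trans ?_ (sum_TT_pos hu)
  apply Finset.sum_nbij' (fun p => (p.1, -p.2.1, p.2.2.1, -p.2.2.2))
    (fun p => (p.1, -p.2.1, p.2.2.1, -p.2.2.2))
  · rintro ⟨x, y, z, t⟩ hp
    simp only [Finset.mem_filter, mem_TT, abs_neg] at hp ⊢
    refine ⟨⟨?_, hp.1.2.1, hp.1.2.2.1, ?_, ?_⟩, ?_⟩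
    · rw [← hp.1.1]; ring
    all_goals omega
  · rintro ⟨x, y, z, t⟩ hp
    simp only [Finset.mem_filter, mem_TT, abs_neg] at hp ⊢
    refine ⟨⟨?_, hp.1.2.1, hp.1.2.2.1, ?_, ?_⟩, ?_⟩
    · rw [← hp.1.1]; ring
    all_goals omega
  · rintro ⟨x, y, z, t⟩ hp; simp
  · rintro ⟨x, y, z, t⟩ hp; simp
  · rintro ⟨x, y, z, t⟩ hp
    simp only [sg]
    split_ifs <;> omega

lemma sum_TT_zero (u : ℕ) (hu : u % 2 = 1) :
    (u : ℤ) ≤ ∑ p ∈ (TT u).filter (fun p => p.2.1 = 0), sg p.2.1 := by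
  have h1 : ∑ p ∈ (TT u).filter (fun p => p.2.1 = 0), sg p.2.1
      = ((TT u).filter (fun p => p.2.1 = 0)).card := by
    rw [Finset.card_eq_sum_ones]; push_cast
    apply Finset.sum_congr rfl
    intro p hp
    rw [(Finset.mem_filter.1 hp).2]; rfl
  rw [h1]
  have h2 : (Finset.range u).card ≤ ((TT u).filter (fun p => p.2.1 = 0)).card := by
    apply Finset.card_le_card_of_injOn (fun i : ℕ => ((1:ℤ), (0:ℤ), (u:ℤ), 2 * (i:ℤ) - (u - 1)))
    · intro i hi
      have hi : i < u := by simpa using hi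
      simp only [Finset.coe_filter, Set.mem_ofPred_eq, mem_TT]
      refine ⟨⟨by ring, by norm_num, ?_, by norm_num, ?_⟩, trivial⟩
      · rw [abs_lt]; omega
      · omega
    · intro i _ j _ h
      simp only [Prod.mk.injEq] at h
      omega
  rw [Finset.card_range] at h2
  exact_mod_cast h2

lemma sum_TT (u : ℕ) (hu : u % 2 = 1) : (u : ℤ) ≤ ∑ p ∈ TT u, sg p.2.1 := by
  have hu' : (u : ℤ) % 2 = 1 := by omega
  have h1 := Finset.sum_filter_add_sum_filter_not (TT u) (fun p => p.2.1 = 0) (fun p => sg p.2.1)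
  have h2 := Finset.sum_filter_add_sum_filter_not ((TT u).filter (fun p => ¬ p.2.1 = 0))
    (fun p => 0 < p.2.1) (fun p => sg p.2.1)
  rw [Finset.filter_filter, Finset.filter_filter] at h2
  have e1 : (TT (u:ℤ)).filter (fun p => ¬ p.2.1 = 0 ∧ 0 < p.2.1) = (TT (u:ℤ)).filter (fun p => 0 < p.2.1) := by
    apply Finset.filter_congr; intro p _; constructor
    · exact fun h => h.2
    · intro h; exact ⟨by omega, h⟩
  have e2 : (TT (u:ℤ)).filter (fun p => ¬ p.2.1 = 0 ∧ ¬ 0 < p.2.1) = (TT (u:ℤ)).filter (fun p => p.2.1 < 0) := by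
    apply Finset.filter_congr; intro p _; omega
  rw [e1, e2, sum_TT_pos hu', sum_TT_neg hu'] at h2
  have h3 := sum_TT_zero u hu
  linarith

def oddV (u : ℕ) : Finset ℕ := (Finset.range (2 * u)).filter (fun v => v % 2 = 1)

lemma f2_anti (n : ℕ) : f2 n = ∑ p ∈ n.divisorsAntidiagonal, ZMod.χ₄ (p.1 : ZMod 4) := by
  rw [f2_apply, Nat.sum_divisorsAntidiagonal (fun d _ => ZMod.χ₄ (d : ZMod 4))]

lemma chi_mul_chi {a b : ℕ} (ha : a % 2 = 1) (hb : b % 2 = 1) :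
    ZMod.χ₄ (a : ZMod 4) * ZMod.χ₄ (b : ZMod 4) = sg (((a:ℤ) - b) / 2) := by
  have h1 : a % 4 = 1 ∨ a % 4 = 3 := by omega
  have h2 : b % 4 = 1 ∨ b % 4 = 3 := by omega
  unfold sg
  rcases h1 with h1 | h1 <;> rcases h2 with h2 | h2 <;>
    simp only [ZMod.χ₄_nat_one_mod_four, ZMod.χ₄_nat_three_mod_four, h1, h2] <;>
    split_ifs <;> first | rfl | omega

lemma sum_f2_f2 (u : ℕ) (hu : u % 2 = 1) :
    (u : ℤ) ≤ ∑ v ∈ oddV u, f2 v * f2 (2 * u - v) := by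
  refine (sum_TT u hu).trans (le_of_eq ?_)
  simp_rw [f2_anti, Finset.sum_mul_sum, ← Finset.sum_product', Finset.sum_sigma']
  symm
  have hodd : ∀ a b : ℕ, (a * b) % 2 = 1 → a % 2 = 1 ∧ b % 2 = 1 := by
    intro a b h
    have : Odd (a * b) := Nat.odd_iff.2 h
    rw [Nat.odd_mul] at this
    exact ⟨Nat.odd_iff.1 this.1, Nat.odd_iff.1 this.2⟩
  apply Finset.sum_nbij'
    (fun p : (Σ _ : ℕ, (ℕ × ℕ) × (ℕ × ℕ)) => ((((p.2.1.1:ℤ) + p.2.2.1) / 2, ((p.2.1.1:ℤ) - p.2.2.1) / 2,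
      ((p.2.1.2:ℤ) + p.2.2.2) / 2, ((p.2.1.2:ℤ) - p.2.2.2) / 2) : ℤ × ℤ × ℤ × ℤ))
    (fun q => (⟨((q.1 + q.2.1) * (q.2.2.1 + q.2.2.2)).toNat,
      (((q.1 + q.2.1).toNat, (q.2.2.1 + q.2.2.2).toNat),
       ((q.1 - q.2.1).toNat, (q.2.2.1 - q.2.2.2).toNat))⟩ : (Σ _ : ℕ, (ℕ × ℕ) × (ℕ × ℕ))))
  · rintro ⟨v, ⟨⟨a, b⟩, ⟨c, e⟩⟩⟩ h
    simp only [oddV, Finset.mem_sigma, Finset.mem_filter, Finset.mem_range, Finset.mem_product,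
      Nat.mem_divisorsAntidiagonal] at h
    obtain ⟨⟨h1, h2⟩, ⟨h3, h4⟩, h5, h6⟩ := h
    subst h3
    obtain ⟨oa, ob⟩ := hodd a b h2
    obtain ⟨oc, oe⟩ := hodd c e (by omega)
    simp only [mem_TT]
    have hN : (a:ℤ) * b + c * e = 2 * u := by
      have : a * b + c * e = 2 * u := by omega
      exact_mod_cast this
    obtain ⟨x, hx⟩ : ∃ x : ℤ, (a:ℤ) + c = 2 * x := ⟨((a:ℤ) + c) / 2, by omega⟩
    obtain ⟨y, hy⟩ : ∃ x : ℤ, (a:ℤ) - c = 2 * x := ⟨((a:ℤ) - c) / 2, by omega⟩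
    obtain ⟨z, hz⟩ : ∃ x : ℤ, (b:ℤ) + e = 2 * x := ⟨((b:ℤ) + e) / 2, by omega⟩
    obtain ⟨t, ht⟩ : ∃ x : ℤ, (b:ℤ) - e = 2 * x := ⟨((b:ℤ) - e) / 2, by omega⟩
    rw [hx, hy, hz, ht]
    simp only [Int.mul_ediv_cancel_left _ (show (2:ℤ) ≠ 0 by norm_num)]
    refine ⟨?_, ?_, ?_, ?_, ?_⟩
    · have ea : (a:ℤ) = x + y := by linarith
      have ec : (c:ℤ) = x - y := by linarith
      have eb : (b:ℤ) = z + t := by linarith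
      have ee : (e:ℤ) = z - t := by linarith
      rw [ea, ec, eb, ee] at hN
      linarith
    · rw [abs_lt]; omega
    · rw [abs_lt]; omega
    · omega
    · omega
  · rintro ⟨x, y, z, t⟩ h
    rw [mem_TT] at h
    obtain ⟨h1, h2, h3, h4, h5⟩ := h
    rw [abs_lt] at h2 h3
    simp only [oddV, Finset.mem_sigma, Finset.mem_filter, Finset.mem_range, Finset.mem_product,
      Nat.mem_divisorsAntidiagonal]
    obtain ⟨a, ha⟩ : ∃ a : ℕ, x + y = a := ⟨(x + y).toNat, by omega⟩
    obtain ⟨b, hb⟩ : ∃ a : ℕ, z + t = a := ⟨(z + t).toNat, by omega⟩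
    obtain ⟨c, hc⟩ : ∃ a : ℕ, x - y = a := ⟨(x - y).toNat, by omega⟩
    obtain ⟨e, he⟩ : ∃ a : ℕ, z - t = a := ⟨(z - t).toNat, by omega⟩
    have hN : (a:ℤ) * b + c * e = 2 * u := by
      rw [← ha, ← hb, ← hc, ← he, ← h1]; ring
    have hN' : a * b + c * e = 2 * u := by exact_mod_cast hN
    have hce : 0 < c * e := Nat.mul_pos (by omega) (by omega)
    rw [ha, hb, hc, he, ← Nat.cast_mul]
    simp only [Int.toNat_natCast]
    have hoa : Odd a := Nat.odd_iff.2 (by omega)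
    have hob : Odd b := Nat.odd_iff.2 (by omega)
    have hab : (a * b) % 2 = 1 := Nat.odd_iff.1 (hoa.mul hob)
    refine ⟨⟨by omega, hab⟩, ⟨trivial, by omega⟩, by omega, by omega⟩
  · rintro ⟨v, ⟨⟨a, b⟩, ⟨c, e⟩⟩⟩ h
    simp only [oddV, Finset.mem_sigma, Finset.mem_filter, Finset.mem_range, Finset.mem_product,
      Nat.mem_divisorsAntidiagonal] at h
    obtain ⟨⟨h1, h2⟩, ⟨h3, h4⟩, h5, h6⟩ := h
    subst h3
    obtain ⟨oa, ob⟩ := hodd a b h2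
    obtain ⟨oc, oe⟩ := hodd c e (by omega)
    have e1 : ((a:ℤ) + c) / 2 + ((a:ℤ) - c) / 2 = a := by omega
    have e2 : ((a:ℤ) + c) / 2 - ((a:ℤ) - c) / 2 = c := by omega
    have e3 : ((b:ℤ) + e) / 2 + ((b:ℤ) - e) / 2 = b := by omega
    have e4 : ((b:ℤ) + e) / 2 - ((b:ℤ) - e) / 2 = e := by omega
    simp only [e1, e2, e3, e4, ← Nat.cast_mul, Int.toNat_natCast]
  · rintro ⟨x, y, z, t⟩ h
    rw [mem_TT] at h
    obtain ⟨h1, h2, h3, h4, h5⟩ := h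
    rw [abs_lt] at h2 h3
    simp only [Prod.mk.injEq]
    omega
  · rintro ⟨v, ⟨⟨a, b⟩, ⟨c, e⟩⟩⟩ h
    simp only [oddV, Finset.mem_sigma, Finset.mem_filter, Finset.mem_range, Finset.mem_product,
      Nat.mem_divisorsAntidiagonal] at h
    obtain ⟨⟨h1, h2⟩, ⟨h3, h4⟩, h5, h6⟩ := h
    subst h3
    obtain ⟨oa, ob⟩ := hodd a b h2
    obtain ⟨oc, oe⟩ := hodd c e (by omega)
    exact chi_mul_chi oa oc

abbrev RR (d : ℕ) (n : ℤ) := {m : Fin d → ℤ // ∑ i, (m i) ^ 2 = n}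

instance RR_finite (d : ℕ) (n : ℤ) : Finite (RR d n) := by
  have hfin : (Set.univ.pi (fun _ : Fin d => Set.Icc (-n) n)).Finite :=
    Set.Finite.pi (fun _ => Set.finite_Icc _ _)
  have : {m : Fin d → ℤ | ∑ i, (m i) ^ 2 = n} ⊆ Set.univ.pi (fun _ : Fin d => Set.Icc (-n) n) := by
    intro m hm i _
    have h1 : (m i) ^ 2 ≤ ∑ i, (m i) ^ 2 :=
      Finset.single_le_sum (f := fun i => (m i) ^ 2) (fun i _ => sq_nonneg _) (Finset.mem_univ i)
    have hm' : ∑ i, (m i) ^ 2 = n := hm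
    rw [hm'] at h1
    constructor <;> nlinarith [sq_nonneg (m i - 1), sq_nonneg (m i + 1)]
  exact (hfin.subset this).to_subtype

lemma half_emod_facts (a b : ℤ) (h : (a - b) % 2 = 0) :
    ((a + b) / 2) ^ 2 + ((a - b) / 2) ^ 2 = (a ^ 2 + b ^ 2) / 2 := by
  obtain ⟨k, hk⟩ : ∃ k, a = b + 2 * k := ⟨(a - b) / 2, by omega⟩
  subst hk
  have e1 : (b + 2 * k + b) / 2 = b + k := by omega
  have e2 : (b + 2 * k - b) / 2 = k := by omega
  have e3 : ((b + 2 * k) ^ 2 + b ^ 2) = 2 * ((b + k) ^ 2 + k ^ 2) := by ring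
  rw [e1, e2, e3]; omega

lemma RR_four (u : ℕ) (hu : u % 2 = 1) : 8 * u ≤ Nat.card (RR 4 u) := by
  classical
  let X := Σ v : (oddV u : Set ℕ), G2 (v : ℕ) × G2 (2 * u - (v : ℕ))
  have hX : 16 * u ≤ Nat.card X := by
    have : Nat.card X = ∑ v ∈ oddV u, Nat.card (G2 v) * Nat.card (G2 (2 * u - v)) := by
      rw [Nat.card_sigma]
      rw [← Finset.sum_coe_sort (oddV u)]
      simp only [Nat.card_prod]
      rfl
    rw [this]
    have h1 := sum_f2_f2 u hu
    have h2 : 16 * ∑ v ∈ oddV u, f2 v * f2 (2 * u - v) ≤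
        ∑ v ∈ oddV u, (Nat.card (G2 v) : ℤ) * Nat.card (G2 (2 * u - v)) := by
      rw [Finset.mul_sum]
      apply Finset.sum_le_sum
      intro v hv
      simp only [oddV, Finset.mem_filter, Finset.mem_range] at hv
      obtain ⟨a1, a2⟩ := G2_lower v (Nat.odd_iff.2 hv.2)
      obtain ⟨b1, b2⟩ := G2_lower (2 * u - v) (Nat.odd_iff.2 (by omega))
      nlinarith
    have h3 : (16 * u : ℤ) ≤ ∑ v ∈ oddV u, (Nat.card (G2 v) : ℤ) * Nat.card (G2 (2 * u - v)) := by
      linarith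
    exact_mod_cast h3
  have par : ∀ x : X, ((x.2.1.1.re - x.2.2.1.re) % 2 = 0 ∧ (x.2.1.1.im - x.2.2.1.im) % 2 = 0) ∨
      ((x.2.1.1.re - x.2.2.1.re) % 2 = 1 ∧ (x.2.1.1.re - x.2.2.1.im) % 2 = 0 ∧
        (x.2.1.1.im - x.2.2.1.re) % 2 = 0) := by
    rintro ⟨⟨v, hv⟩, ⟨z, hz⟩, ⟨w, hw⟩⟩
    simp only [oddV, Finset.coe_filter, Finset.mem_range, Set.mem_ofPred_eq] at hv
    simp only [Zsqrtd.norm_def] at hz hw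
    simp only
    have k1 : ∀ a : ℤ, (a * a) % 2 = a % 2 := by
      intro a
      rcases Int.emod_two_eq_zero_or_one a with h | h <;> simp [Int.mul_emod, h]
    have := k1 z.re
    have := k1 z.im
    have := k1 w.re
    have := k1 w.im
    have hz2 : z.re * z.re + z.im * z.im = v := by linarith
    have hw2 : w.re * w.re + w.im * w.im = ((2 * u - v : ℕ) : ℤ) := by linarith
    omega
  have nrm : ∀ x : X, (x.2.1.1.re ^ 2 + x.2.1.1.im ^ 2) + (x.2.2.1.re ^ 2 + x.2.2.1.im ^ 2) = 2 * u := by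
    rintro ⟨⟨v, hv⟩, ⟨z, hz⟩, ⟨w, hw⟩⟩
    simp only [oddV, Finset.coe_filter, Finset.mem_range, Set.mem_ofPred_eq] at hv
    simp only [Zsqrtd.norm_def] at hz hw
    simp only
    have hz2 : z.re ^ 2 + z.im ^ 2 = v := by linarith
    have hw2 : w.re ^ 2 + w.im ^ 2 = ((2 * u - v : ℕ) : ℤ) := by linarith
    rw [hz2, hw2]; omega
  have evn : ∀ a b : ℤ, (a - b) % 2 = 0 → (a ^ 2 + b ^ 2) % 2 = 0 := by
    intro a b h
    obtain ⟨k, hk⟩ : ∃ k, a = b + 2 * k := ⟨(a - b) / 2, by omega⟩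
    subst hk
    have e3 : ((b + 2 * k) ^ 2 + b ^ 2) = 2 * ((b + k) ^ 2 + k ^ 2) := by ring
    omega
  let g : X → RR 4 u × Bool := fun x =>
    if h : (x.2.1.1.re - x.2.2.1.re) % 2 = 0 then
      (⟨![(x.2.1.1.re + x.2.2.1.re) / 2, (x.2.1.1.re - x.2.2.1.re) / 2,
          (x.2.1.1.im + x.2.2.1.im) / 2, (x.2.1.1.im - x.2.2.1.im) / 2], by
        have hp : (x.2.1.1.im - x.2.2.1.im) % 2 = 0 := by
          rcases par x with h' | h' <;> omega
        have hn := nrm x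
        have := evn _ _ h
        have := evn _ _ hp
        have := half_emod_facts _ _ h
        have := half_emod_facts _ _ hp
        simp only [Fin.sum_univ_four, Matrix.cons_val]
        omega⟩, true)
    else
      (⟨![(x.2.1.1.re + x.2.2.1.im) / 2, (x.2.1.1.re - x.2.2.1.im) / 2,
          (x.2.1.1.im + x.2.2.1.re) / 2, (x.2.1.1.im - x.2.2.1.re) / 2], by
        have h1 : (x.2.1.1.re - x.2.2.1.im) % 2 = 0 := by
          rcases par x with h' | h' <;> omega
        have hp : (x.2.1.1.im - x.2.2.1.re) % 2 = 0 := by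
          rcases par x with h' | h' <;> omega
        have hn := nrm x
        have := evn _ _ h1
        have := evn _ _ hp
        have := half_emod_facts _ _ h1
        have := half_emod_facts _ _ hp
        simp only [Fin.sum_univ_four, Matrix.cons_val]
        omega⟩, false)
  have key : ∀ x x' : X, x.2.1.1 = x'.2.1.1 → x.2.2.1 = x'.2.2.1 → x = x' := by
    rintro ⟨⟨v, hv⟩, ⟨z, hz⟩, ⟨w, hw⟩⟩ ⟨⟨v', hv'⟩, ⟨z', hz'⟩, ⟨w', hw'⟩⟩ h1 h2
    simp only at h1 h2
    subst h1; subst h2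
    have : v = v' := by
      have hz'' := hz.symm.trans hz'
      simp only at hz''
      exact_mod_cast hz''
    subst this
    rfl
  have hg : Function.Injective g := by
    intro x x' h
    have p1 := par x
    have p2 := par x'
    by_cases c1 : (x.2.1.1.re - x.2.2.1.re) % 2 = 0 <;>
    by_cases c2 : (x'.2.1.1.re - x'.2.2.1.re) % 2 = 0
    · simp only [g, c1, c2, dif_pos, Prod.mk.injEq, Subtype.mk.injEq, and_true] at h
      have h0 := congrFun h 0
      have h1 := congrFun h 1
      have h2 := congrFun h 2
      have h3 := congrFun h 3
      simp only [Matrix.cons_val] at h0 h1 h2 h3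
      apply key <;> ext <;> omega
    · simp only [g, c1, c2, dif_pos, dif_neg, Prod.mk.injEq, not_false_eq_true] at h
      exact absurd h.2 (by decide)
    · simp only [g, c1, c2, dif_pos, dif_neg, Prod.mk.injEq, not_false_eq_true] at h
      exact absurd h.2 (by decide)
    · simp only [g, c1, c2, dif_neg, Prod.mk.injEq, Subtype.mk.injEq, and_true, not_false_eq_true] at h
      have h0 := congrFun h 0
      have h1 := congrFun h 1
      have h2 := congrFun h 2
      have h3 := congrFun h 3
      simp only [Matrix.cons_val] at h0 h1 h2 h3
      apply key <;> ext <;> omega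
  have := Nat.card_le_card_of_injective g hg
  rw [Nat.card_prod] at this
  simp at this
  omega

lemma RR_succ (d : ℕ) (n : ℤ) (K : ℕ) (φ : ℕ → ℤ) (hφ : Function.Injective φ) :
    ∑ i ∈ Finset.range K, Nat.card (RR d (n - φ i ^ 2)) ≤ Nat.card (RR (d + 1) n) := by
  let g : (Σ i : Fin K, RR d (n - φ i ^ 2)) → RR (d + 1) n := fun x =>
    ⟨Fin.cons (φ x.1) x.2.1, by
      rw [Fin.sum_univ_succ]; simp [x.2.2]⟩
  have hg : Function.Injective g := by
    rintro ⟨i, m, hm⟩ ⟨i', m', hm'⟩ h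
    simp only [g, Subtype.mk.injEq] at h
    obtain ⟨h1, h2⟩ := Fin.cons_inj.1 h
    have : i = i' := Fin.ext (hφ h1)
    subst this
    subst h2
    rfl
  have := Nat.card_le_card_of_injective g hg
  rw [Nat.card_sigma, Fin.sum_univ_eq_sum_range (fun i => Nat.card (RR d (n - φ i ^ 2)))] at this
  exact this

lemma RR_five (n : ℕ) (hn : 1 ≤ n) : (Nat.sqrt (n / 2) + 1) * n ≤ Nat.card (RR 5 n) := by
  set s := Nat.sqrt (n / 2) with hs
  have hs2 : s * s ≤ n / 2 := Nat.sqrt_le _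
  set c := if n % 2 = 0 then 1 else 0 with hc
  obtain ⟨K, hK1, hK2⟩ : ∃ K : ℕ, (s + 1) ≤ 3 * K ∧ ∀ i < K, 2 * i + c ≤ s := by
    by_cases h : n % 2 = 0
    · have : 0 < s := Nat.sqrt_pos.2 (by omega)
      refine ⟨(s + 1) / 2, by omega, ?_⟩
      intro i hi
      simp only [hc, h, if_true]; omega
    · refine ⟨s / 2 + 1, by omega, ?_⟩
      intro i hi
      simp only [hc, h, if_false]; omega
  have h1 := RR_succ 4 n K (fun i => 2 * (i:ℤ) + (c : ℤ)) (by
    intro a b h; simp only at h; omega)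
  have h2 : ∀ i ∈ Finset.range K, 4 * n ≤ Nat.card (RR 4 ((n:ℤ) - (2 * (i:ℤ) + (c : ℤ)) ^ 2)) := by
    intro i hi
    have hi := hK2 i (Finset.mem_range.1 hi)
    have hsq : (2 * i + c) ^ 2 ≤ n / 2 := by nlinarith
    have e : (n:ℤ) - (2 * (i:ℤ) + (c : ℤ)) ^ 2 = ((n - (2 * i + c) ^ 2 : ℕ) : ℤ) := by
      rw [Nat.cast_sub (by omega)]; push_cast; ring
    rw [e]
    refine le_trans ?_ (RR_four _ ?_)
    · omega
    · have hodd : ((2 * i + c) ^ 2) % 2 = c := by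
        rcases Nat.mod_two_eq_zero_or_one n with h | h
        · simp only [hc, h, if_true]
          have : (2 * i + 1) ^ 2 = 2 * (2 * i ^ 2 + 2 * i) + 1 := by ring
          omega
        · have h' : ¬ n % 2 = 0 := by omega
          simp only [hc, h', if_false]
          have : (2 * i + 0) ^ 2 = 2 * (2 * i ^ 2) := by ring
          omega
      have : c = 1 - n % 2 := by
        rcases Nat.mod_two_eq_zero_or_one n with h | h <;> simp [hc, h]
      omega
  have h3 := Finset.card_nsmul_le_sum _ _ _ h2
  simp only [Finset.card_range, smul_eq_mul] at h3
  nlinarith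

lemma sqrt_half_bound (n : ℕ) : ((n:ℝ) / 2) ^ ((1:ℝ)/2) ≤ (Nat.sqrt (n / 2) : ℝ) + 1 := by
  rw [← Real.sqrt_eq_rpow]
  apply Real.sqrt_le_iff.2 ⟨by positivity, ?_⟩
  have h := Nat.lt_succ_sqrt (n / 2)
  have h2 : n ≤ 2 * ((Nat.sqrt (n / 2) + 1) * (Nat.sqrt (n / 2) + 1)) := by
    simp only [Nat.succ_eq_add_one] at h
    omega
  have h3 : (n:ℝ) ≤ 2 * (((Nat.sqrt (n / 2) : ℝ) + 1) * ((Nat.sqrt (n / 2) : ℝ) + 1)) := by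
    exact_mod_cast h2
  nlinarith

lemma RR_lower (d : ℕ) (hd : 5 ≤ d) : ∃ c : ℝ, 0 < c ∧ ∀ n : ℕ, 1 ≤ n →
    c * (n:ℝ) ^ (((d:ℝ) - 2) / 2) ≤ (Nat.card (RR d n) : ℝ) := by
  induction d, hd using Nat.le_induction with
  | base =>
    refine ⟨(1/2:ℝ) ^ ((1:ℝ)/2), by positivity, fun n hn => ?_⟩
    have hn0 : (0:ℝ) < n := by exact_mod_cast hn
    have h1 : (((Nat.sqrt (n / 2) + 1) * n : ℕ) : ℝ) ≤ (Nat.card (RR 5 n) : ℝ) := by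
      exact_mod_cast RR_five n hn
    refine le_trans ?_ h1
    push_cast
    have h2 := sqrt_half_bound n
    have e : ((5:ℝ) - 2) / 2 = 1/2 + 1 := by norm_num
    have e2 : (n:ℝ) / 2 = (1/2) * n := by ring
    rw [e, Real.rpow_add hn0, Real.rpow_one, ← mul_assoc, ← Real.mul_rpow (by norm_num) hn0.le, ← e2]
    exact mul_le_mul_of_nonneg_right h2 hn0.le
  | succ d hd ih =>
    obtain ⟨c, hc, ih⟩ := ih
    refine ⟨c * (1/2:ℝ) ^ ((((d+1:ℕ):ℝ) - 2) / 2), by positivity, fun n hn => ?_⟩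
    have hn0 : (0:ℝ) < n := by exact_mod_cast hn
    set s := Nat.sqrt (n / 2) with hs
    have hs2 : s * s ≤ n / 2 := Nat.sqrt_le _
    have h1 := RR_succ d n (s + 1) (fun i => (i:ℤ)) (by intro a b h; simpa using h)
    have h2 : ∀ i ∈ Finset.range (s + 1), c * ((n:ℝ) / 2) ^ (((d:ℝ) - 2) / 2) ≤
        (Nat.card (RR d ((n:ℤ) - (i:ℤ) ^ 2)) : ℝ) := by
      intro i hi
      have hi := Finset.mem_range.1 hi
      have hsq : i ^ 2 ≤ n / 2 := by nlinarith
      have e : (n:ℤ) - (i:ℤ) ^ 2 = ((n - i ^ 2 : ℕ) : ℤ) := by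
        rw [Nat.cast_sub (by omega)]; push_cast; ring
      rw [e]
      refine le_trans ?_ (ih _ (by omega))
      apply mul_le_mul_of_nonneg_left _ hc.le
      have hd5 : (5:ℝ) ≤ d := by exact_mod_cast hd
      apply Real.rpow_le_rpow (by positivity) _ (by linarith)
      have : n ≤ 2 * (n - i ^ 2) := by omega
      have : (n:ℝ) ≤ 2 * ((n - i ^ 2 : ℕ) : ℝ) := by exact_mod_cast this
      linarith
    have h3 := Finset.card_nsmul_le_sum _ _ _ h2
    simp only [Finset.card_range, nsmul_eq_mul] at h3
    have h4 : ((∑ i ∈ Finset.range (s+1), Nat.card (RR d ((n:ℤ) - (i:ℤ) ^ 2)) : ℕ) : ℝ) ≤ (Nat.card (RR (d+1) n) : ℝ) := by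
      exact_mod_cast h1
    push_cast at h3 h4
    refine le_trans ?_ (h3.trans h4)
    have h5 := sqrt_half_bound n
    have e2 : (n:ℝ) / 2 = (1/2) * n := by ring
    rw [mul_assoc, ← Real.mul_rpow (by norm_num) hn0.le, ← e2]
    have e3 : (((d+1:ℕ):ℝ) - 2) / 2 = 1/2 + ((d:ℝ) - 2) / 2 := by push_cast; ring
    rw [e3, Real.rpow_add (by positivity)]
    have h6 : 0 ≤ c * ((n:ℝ) / 2) ^ (((d:ℝ) - 2) / 2) := by positivity
    nlinarith [mul_le_mul_of_nonneg_right h5 h6]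

lemma exists_torus_meas (d : ℕ) : ∃ (μ : MeasureTheory.Measure (UnitAddTorus (Fin d)))
    (_ : MeasureTheory.IsFiniteMeasure μ),
    Orthonormal ℂ (fun n : Fin d → ℤ => ContinuousMap.toLp (E := ℂ) 2 μ ℂ (UnitAddTorus.mFourier n)) :=
  ⟨_, _, UnitAddTorus.orthonormal_mFourier⟩

lemma orthonormal_tsum_norm {ι H : Type*} [NormedAddCommGroup H] [InnerProductSpace ℂ H]
    {v : ι → H} (hv : Orthonormal ℂ v) {g : ι → ℂ} {X : H}
    (hX : HasSum (fun n => g n • v n) X) : HasSum (fun n => ‖g n‖ ^ 2) (‖X‖ ^ 2) := by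
  classical
  have h1 : ∀ n, inner ℂ (v n) X = g n := by
    intro n
    have := hX.mapL (innerSL ℂ (v n))
    simp only [innerSL_apply_apply, inner_smul_right] at this
    refine this.unique ?_
    have hfe : (fun m => g m * inner ℂ (v n) (v m)) = fun m => if m = n then g n else 0 := by
      funext m
      rw [orthonormal_iff_ite.1 hv n m]
      by_cases h : n = m
      · subst h; simp
      · have hh : ¬ m = n := fun h2 => h h2.symm
        simp [h, hh]
    rw [hfe]
    exact hasSum_ite_eq n (g n)
  have h2 := hX.mapL (innerSL ℂ X)
  simp only [innerSL_apply_apply, inner_smul_right] at h2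
  have h3 : ∀ n, g n * inner ℂ X (v n) = ((‖g n‖ ^ 2 : ℝ) : ℂ) := by
    intro n
    rw [← inner_conj_symm, h1, Complex.mul_conj, Complex.normSq_eq_norm_sq]
  simp only [h3] at h2
  rw [inner_self_eq_norm_sq_to_K] at h2
  have h4 := Complex.hasSum_re h2
  have h5 : ((((‖X‖ : ℝ) : ℂ)) ^ 2).re = ‖X‖ ^ 2 := by
    rw [← Complex.ofReal_pow, Complex.ofReal_re]
  simp only [Complex.ofReal_re] at h4
  erw [h5] at h4
  exact h4

def shiftEquiv (G : Type*) [AddCommGroup G] : G × G ≃ G × G where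
  toFun p := (p.2, p.1 - p.2)
  invFun p := (p.2 + p.1, p.1)
  left_inv p := by simp
  right_inv p := by simp

lemma conv_summable {G : Type*} [AddCommGroup G] {w f : G → ℂ}
    (hw : Summable (fun n => ‖w n‖)) (hf : Summable (fun n => ‖f n‖)) :
    Summable (fun p : G × G => ‖w p.2 * f (p.1 - p.2)‖) := by
  have h := hw.mul_norm hf
  exact (shiftEquiv G).summable_iff.2 h

lemma conv_norm_summable {G : Type*} [AddCommGroup G] {w f : G → ℂ}
    (hw : Summable (fun n => ‖w n‖)) (hf : Summable (fun n => ‖f n‖)) :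
    Summable (fun n => ‖∑' m, w m * f (n - m)‖) := by
  have h := conv_summable hw hf
  have h1 := h.prod
  refine Summable.of_nonneg_of_le (fun _ => norm_nonneg _) (fun n => ?_) h1
  exact norm_tsum_le_tsum_norm (h.prod_factor n)

lemma conv_tsum {G : Type*} [AddCommGroup G] {w f : G → ℂ}
    (hw : Summable (fun n => ‖w n‖)) (hf : Summable (fun n => ‖f n‖)) :
    ∑' n, ∑' m, w m * f (n - m) = (∑' n, w n) * ∑' n, f n := by
  rw [tsum_mul_tsum_of_summable_norm hw hf]
  have h := (conv_summable hw hf).of_norm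
  rw [← h.tsum_prod]
  exact (shiftEquiv G).tsum_eq (fun p : G × G => w p.1 * f p.2)

lemma mFourier_real {d : ℕ} (n : Fin d → ℤ) (α : Fin d → ℝ) :
    UnitAddTorus.mFourier n (fun i => ((-α i : ℝ) : UnitAddCircle)) =
      Complex.exp (-(2 * (π : ℂ) * Complex.I) * (∑ i, (n i : ℝ) * α i)) := by
  simp only [UnitAddTorus.mFourier, ContinuousMap.coe_mk]
  simp_rw [fourier_coe_apply]
  rw [← Complex.exp_sum]
  push_cast
  rw [Finset.mul_sum]
  congr 1
  apply Finset.sum_congr rfl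
  intro i _
  push_cast; ring

/-- the character -/
noncomputable def chr {d : ℕ} (α : Fin d → ℝ) (n : Fin d → ℤ) : ℂ :=
  Complex.exp (-(2 * (π : ℂ) * Complex.I) * (∑ i, (n i : ℝ) * α i))

lemma plancherel_mult {d : ℕ} {w f : (Fin d → ℤ) → ℂ}
    (hw : Summable (fun n => ‖w n‖)) (hf : Summable (fun n => ‖f n‖)) (M : ℝ) (hM : 0 ≤ M)
    (h : ∀ α : Fin d → ℝ, ‖∑' n, w n * chr α n‖ ≤ M ∨ ∑' n, f n * chr α n = 0) :
    Summable (fun n => ‖∑' m, w m * f (n - m)‖ ^ 2) ∧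
    ∑' n, ‖∑' m, w m * f (n - m)‖ ^ 2 ≤ M ^ 2 * ∑' n, ‖f n‖ ^ 2 := by
  obtain ⟨μ, hμ, hv⟩ := exists_torus_meas d
  have hC : ∀ g : (Fin d → ℤ) → ℂ, Summable (fun n => ‖g n‖) →
      Summable (fun n => g n • (UnitAddTorus.mFourier n : C(UnitAddTorus (Fin d), ℂ))) := by
    intro g hg
    apply Summable.of_norm
    simpa only [norm_smul, UnitAddTorus.mFourier_norm, mul_one] using hg
  let F : ((Fin d → ℤ) → ℂ) → C(UnitAddTorus (Fin d), ℂ) := fun g =>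
    ∑' n, g n • (UnitAddTorus.mFourier n : C(UnitAddTorus (Fin d), ℂ))
  have hP : ∀ g : (Fin d → ℤ) → ℂ, Summable (fun n => ‖g n‖) →
      HasSum (fun n => ‖g n‖ ^ 2) (‖ContinuousMap.toLp (E := ℂ) 2 μ ℂ (F g)‖ ^ 2) := by
    intro g hg
    apply orthonormal_tsum_norm hv
    have := (hC g hg).hasSum.mapL (ContinuousMap.toLp (E := ℂ) 2 μ ℂ)
    simpa only [map_smul] using this
  have hFx : ∀ g : (Fin d → ℤ) → ℂ, Summable (fun n => ‖g n‖) → ∀ α : Fin d → ℝ,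
      F g (fun i => ((-α i : ℝ) : UnitAddCircle)) = ∑' n, g n * chr α n := by
    intro g hg α
    show (∑' n, g n • (UnitAddTorus.mFourier n : C(UnitAddTorus (Fin d), ℂ))) _ = _
    rw [← ContinuousMap.tsum_apply (hC g hg)]
    apply tsum_congr
    intro n
    rw [ContinuousMap.smul_apply, mFourier_real, smul_eq_mul]; rfl
  have hc := conv_norm_summable hw hf
  set c := fun n => ∑' m, w m * f (n - m) with hcdef
  have hchr_norm : ∀ (α : Fin d → ℝ) n, ‖chr α n‖ = 1 := by
    intro α n
    have : -(2 * (π : ℂ) * Complex.I) * ((∑ i, (n i : ℝ) * α i : ℝ) : ℂ) =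
        ((-(2 * π) * (∑ i, (n i : ℝ) * α i) : ℝ) : ℂ) * Complex.I := by
      push_cast; ring
    rw [chr, this, Complex.norm_exp_ofReal_mul_I]
  have hchr_add : ∀ (α : Fin d → ℝ) m n, chr α (m + n) = chr α m * chr α n := by
    intro α m n
    simp only [chr, ← Complex.exp_add, Pi.add_apply]
    congr 1
    push_cast
    simp only [add_mul, Finset.sum_add_distrib]
    ring
  have hpt : ∀ x, ‖F c x‖ ≤ M * ‖F f x‖ := by
    intro x
    obtain ⟨α, rfl⟩ : ∃ α : Fin d → ℝ, x = (fun i => ((-α i : ℝ) : UnitAddCircle)) := by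
      have : ∀ i, ∃ a : ℝ, ((-a : ℝ) : UnitAddCircle) = x i := by
        intro i
        obtain ⟨b, hb⟩ := QuotientAddGroup.mk_surjective (x i)
        exact ⟨-b, by rw [neg_neg]; exact hb⟩
      choose α hα using this
      exact ⟨α, funext fun i => (hα i).symm⟩
    rw [hFx c hc, hFx f hf]
    have hmul : ∑' n, c n * chr α n = (∑' n, w n * chr α n) * ∑' n, f n * chr α n := by
      rw [← conv_tsum]
      · apply tsum_congr
        intro n
        rw [hcdef, ← tsum_mul_right]
        apply tsum_congr
        intro m
        have : chr α n = chr α m * chr α (n - m) := by rw [← hchr_add]; simp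
        rw [this]; ring
      · simpa [norm_mul, hchr_norm] using hw
      · simpa [norm_mul, hchr_norm] using hf
    rw [hmul, norm_mul]
    rcases h α with h | h
    · exact mul_le_mul_of_nonneg_right h (norm_nonneg _)
    · rw [h]; simp
  have hL : ‖ContinuousMap.toLp (E := ℂ) 2 μ ℂ (F c)‖ ≤ M * ‖ContinuousMap.toLp (E := ℂ) 2 μ ℂ (F f)‖ := by
    apply MeasureTheory.Lp.norm_le_mul_norm_of_ae_le_mul
    filter_upwards [ContinuousMap.coeFn_toLp (p := 2) (𝕜 := ℂ) μ (F c),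
      ContinuousMap.coeFn_toLp (p := 2) (𝕜 := ℂ) μ (F f)] with x h1 h2
    rw [h1, h2]; exact hpt x
  have p1 := hP c hc
  have p2 := hP f hf
  refine ⟨p1.summable, ?_⟩
  rw [p1.tsum_eq, p2.tsum_eq, ← mul_pow]
  gcongr

lemma gauss_summable {c : ℝ} (hc : 0 < c) : Summable (fun n : ℤ => Real.exp (-π * c * (n : ℝ) ^ 2)) := by
  have h := summable_pow_mul_jacobiTheta₂_term_bound 0 hc 0
  refine h.congr ?_
  intro n
  simp only [pow_zero, one_mul]
  congr 1
  ring

/-- shifted Gaussian sums are uniformly bounded -/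
lemma gauss_shift {c : ℝ} (hc : 0 < c) : ∃ K : ℝ, 0 < K ∧ ∀ x : ℝ,
    Summable (fun m : ℤ => Real.exp (-π * c * ((m : ℝ) - x) ^ 2)) ∧
    ∑' m : ℤ, Real.exp (-π * c * ((m : ℝ) - x) ^ 2) ≤ K := by
  have hs := gauss_summable (c := c / 4) (by positivity)
  refine ⟨∑' n : ℤ, Real.exp (-π * (c / 4) * (n : ℝ) ^ 2), ?_, ?_⟩
  · exact hs.tsum_pos (fun _ => (Real.exp_pos _).le) 0 (Real.exp_pos _)
  intro x
  set e := Equiv.addRight (round x) with he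
  have hle : ∀ n : ℤ, Real.exp (-π * c * (((e n : ℤ) : ℝ) - x) ^ 2) ≤
      Real.exp (-π * (c / 4) * (n : ℝ) ^ 2) := by
    intro n
    apply Real.exp_le_exp.2
    have h1 : (n : ℝ) ^ 2 ≤ 4 * (((e n : ℤ) : ℝ) - x) ^ 2 := by
      rw [he, Equiv.coe_addRight]
      push_cast
      have hr := abs_sub_round x
      rw [abs_le] at hr
      rcases lt_trichotomy n 0 with hn | hn | hn
      · have : (n : ℝ) ≤ -1 := by exact_mod_cast (by omega : n ≤ -1)
        nlinarith
      · subst hn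
        simp only [Int.cast_zero]; nlinarith [sq_nonneg (0 + (round x : ℝ) - x)]
      · have : (1 : ℝ) ≤ n := by exact_mod_cast (by omega : 1 ≤ n)
        nlinarith
    have := mul_le_mul_of_nonneg_left h1 (by positivity : 0 ≤ π * (c / 4))
    nlinarith
  have hs2 : Summable (fun n : ℤ => Real.exp (-π * c * (((e n : ℤ) : ℝ) - x) ^ 2)) :=
    Summable.of_nonneg_of_le (fun _ => (Real.exp_pos _).le) hle hs
  refine ⟨e.summable_iff.1 hs2, ?_⟩
  rw [← e.tsum_eq]
  exact hs2.tsum_le_tsum hle hs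

/-- normalized Gauss sum -/
noncomputable def GS (q : ℕ) [NeZero q] (a l : ZMod q) : ℂ :=
  (q : ℂ)⁻¹ * ∑ r : ZMod q, ZMod.stdAddChar (a * r ^ 2 + l * r)

lemma card_two_torsion (q : ℕ) [NeZero q] :
    (Finset.univ.filter (fun h : ZMod q => 2 * h = 0)).card ≤ 2 := by
  have : Finset.univ.filter (fun h : ZMod q => 2 * h = 0) ⊆ {0, ((q / 2 : ℕ) : ZMod q)} := by
    intro h hh
    simp only [Finset.mem_filter, Finset.mem_univ, true_and] at hh
    simp only [Finset.mem_insert, Finset.mem_singleton]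
    have h1 : ((2 * h.val : ℕ) : ZMod q) = 0 := by
      push_cast; rw [ZMod.natCast_zmod_val]; exact hh
    rw [ZMod.natCast_eq_zero_iff] at h1
    have h2 := ZMod.val_lt h
    obtain ⟨c, hc⟩ := h1
    have hc2 : c = 0 ∨ c = 1 := by
      have : c < 2 := by
        by_contra hcon
        push Not at hcon
        nlinarith
      omega
    rcases hc2 with rfl | rfl
    · left
      rw [← ZMod.val_eq_zero]; omega
    · right
      have : q / 2 = h.val := by omega
      rw [this, ZMod.natCast_zmod_val]
  exact (Finset.card_le_card this).trans Finset.card_le_two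

lemma GS_norm (q : ℕ) [NeZero q] (a l : ZMod q) (ha : IsUnit a) : ‖GS q a l‖ ≤ Real.sqrt 2 / Real.sqrt q := by
  classical
  have hq : (0 : ℝ) < q := by exact_mod_cast Nat.pos_of_ne_zero (NeZero.ne q)
  set ψ : AddChar (ZMod q) ℂ := ZMod.stdAddChar with hψ
  set S := ∑ r : ZMod q, ψ (a * r ^ 2 + l * r) with hS
  have hnorm : ∀ x, ‖ψ x‖ = 1 := fun x => AddChar.norm_apply ψ x
  have hconj : ∀ x, (starRingEnd ℂ) (ψ x) = ψ (-x) := by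
    intro x
    rw [AddChar.map_neg_eq_conj]
  have h1 : S * (starRingEnd ℂ) S = ∑ h : ZMod q, ψ (a * h ^ 2 + l * h) * (if 2 * h = 0 then (q : ℂ) else 0) := by
    rw [hS, map_sum, Finset.sum_mul_sum]
    rw [Finset.sum_comm]
    have : ∀ s : ZMod q, ∑ r : ZMod q, ψ (a * r ^ 2 + l * r) * (starRingEnd ℂ) (ψ (a * s ^ 2 + l * s)) =
        ∑ h : ZMod q, ψ (a * h ^ 2 + l * h) * ψ (s * (2 * a * h)) := by
      intro s
      rw [← Equiv.sum_comp (Equiv.addRight s) (fun r => ψ (a * r ^ 2 + l * r) * (starRingEnd ℂ) (ψ (a * s ^ 2 + l * s)))]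
      apply Finset.sum_congr rfl
      intro h _
      rw [hconj, ← AddChar.map_add_eq_mul, ← AddChar.map_add_eq_mul, Equiv.coe_addRight]
      congr 1
      ring
    rw [Finset.sum_congr rfl (fun s _ => this s), Finset.sum_comm]
    apply Finset.sum_congr rfl
    intro h _
    rw [← Finset.mul_sum, AddChar.sum_mulShift _ (ZMod.isPrimitive_stdAddChar q), ZMod.card]
    congr 1
    have : (2 * a * h = 0) ↔ (2 * h = 0) := by
      rw [show 2 * a * h = a * (2 * h) by ring]
      exact ha.mul_right_eq_zero
    simp only [this]
    split_ifs <;> simp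
  have h2 : ‖S‖ ^ 2 ≤ 2 * q := by
    have : ‖S‖ ^ 2 = ‖S * (starRingEnd ℂ) S‖ := by
      rw [norm_mul, RCLike.norm_conj, sq]
    rw [this, h1]
    refine (norm_sum_le _ _).trans ?_
    simp only [norm_mul, hnorm, one_mul]
    have : ∀ h : ZMod q, ‖(if 2 * h = 0 then (q : ℂ) else 0)‖ = if 2 * h = 0 then (q : ℝ) else 0 := by
      intro h; split_ifs <;> simp
    simp only [this]
    rw [← Finset.sum_filter, Finset.sum_const, nsmul_eq_mul]
    have := card_two_torsion q
    gcongr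
    exact_mod_cast this
  have h3 : ‖S‖ ≤ Real.sqrt (2 * q) := Real.le_sqrt_of_sq_le h2
  rw [GS, norm_mul, norm_inv, Complex.norm_natCast]
  calc (q : ℝ)⁻¹ * ‖S‖ ≤ (q : ℝ)⁻¹ * Real.sqrt (2 * q) := by gcongr
    _ = Real.sqrt 2 / Real.sqrt q := by
      rw [Real.sqrt_mul (by norm_num)]
      have hs : Real.sqrt q ≠ 0 := (Real.sqrt_pos.2 hq).ne'
      field_simp
      rw [Real.sq_sqrt hq.le]

lemma GS_inv (q : ℕ) [NeZero q] (a x : ZMod q) :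
    (ZMod.stdAddChar (a * x ^ 2) : ℂ) = ∑ l : ZMod q, GS q a l * ZMod.stdAddChar (-(l * x)) := by
  classical
  have hq : (q : ℂ) ≠ 0 := by exact_mod_cast NeZero.ne q
  set ψ : AddChar (ZMod q) ℂ := ZMod.stdAddChar with hψ
  have h1 : ∀ l, GS q a l * ψ (-(l * x)) = (q : ℂ)⁻¹ * ∑ r : ZMod q, ψ (a * r ^ 2) * ψ (l * (r - x)) := by
    intro l
    rw [GS, mul_assoc, Finset.sum_mul]
    congr 1
    apply Finset.sum_congr rfl
    intro r _
    rw [← AddChar.map_add_eq_mul, ← AddChar.map_add_eq_mul]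
    congr 1; ring
  simp only [h1]
  rw [← Finset.mul_sum, Finset.sum_comm]
  have hsum : ∀ b : ZMod q, ∑ l : ZMod q, ψ (l * b) = if b = 0 then (q : ℂ) else 0 := by
    intro b
    rw [AddChar.sum_mulShift _ (ZMod.isPrimitive_stdAddChar q), ZMod.card]
    split_ifs <;> simp
  have h2 : ∀ r : ZMod q, ∑ l : ZMod q, ψ (a * r ^ 2) * ψ (l * (r - x)) =
      if r = x then ψ (a * r ^ 2) * q else 0 := by
    intro r
    rw [← Finset.mul_sum, hsum]
    simp only [sub_eq_zero]
    split_ifs <;> simp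
  rw [Finset.sum_congr rfl (fun r _ => h2 r), Finset.sum_ite_eq' Finset.univ x, if_pos (Finset.mem_univ _)]
  field_simp

lemma sum_zmod_val (q : ℕ) [NeZero q] (g : ℕ → ℝ) : ∑ l : ZMod q, g l.val = ∑ i : Fin q, g i := by
  cases q with
  | zero => exact absurd rfl (NeZero.ne 0)
  | succ n => rfl

lemma tsum_divMod (q : ℕ) [NeZero q] (H : ℤ → ℝ) (hH : Summable H) :
    ∑ i : Fin q, ∑' n : ℤ, H (n * q + (i : ℕ)) = ∑' m, H m := by
  have h1 : Summable (fun p : ℤ × Fin q => H (p.1 * q + (p.2 : ℕ))) := by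
    have := (Int.divModEquiv q).symm.summable_iff.2 hH
    refine this.congr ?_
    intro p
    simp [Int.divModEquiv_symm_apply]
  rw [← (Int.divModEquiv q).symm.tsum_eq H]
  have : ∀ p : ℤ × Fin q, H ((Int.divModEquiv q).symm p) = H (p.1 * q + (p.2 : ℕ)) := by
    intro p
    simp [Int.divModEquiv_symm_apply]
  simp only [this]
  rw [h1.tsum_prod, ← Summable.tsum_finsetSum]
  · simp only [tsum_fintype]
  · intro i _
    exact h1.comp_injective (i := fun n : ℤ => (n, i)) (fun x y h => by simpa using h)

lemma theta_summable {z : ℂ} (hz : 0 < z.re) (β : ℝ) :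
    Summable (fun m : ℤ => Complex.exp (-π * (2 * z) * (m : ℂ) ^ 2 + 2 * π * (-Complex.I * β) * m)) := by
  have h := (summable_jacobiTheta₂_term_iff (-β) (Complex.I * (2 * z))).2 (by simpa using hz)
  refine h.congr ?_
  intro m
  rw [jacobiTheta₂_term]
  congr 1
  linear_combination (2 * π * m ^ 2 * z) * Complex.I_sq

lemma theta_one {z : ℂ} (hz : 0 < z.re) (β : ℝ)
    (hs : Summable (fun n : ℤ => Real.exp (-π * (z.re / (2 * ‖z‖ ^ 2)) * ((n : ℝ) + β) ^ 2))) :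
    ‖∑' m : ℤ, Complex.exp (-π * (2 * z) * (m : ℂ) ^ 2 + 2 * π * (-Complex.I * β) * m)‖ ≤
      (Real.sqrt ‖z‖)⁻¹ * ∑' n : ℤ, Real.exp (-π * (z.re / (2 * ‖z‖ ^ 2)) * ((n : ℝ) + β) ^ 2) := by
  have hz0 : z ≠ 0 := by rintro rfl; simp at hz
  rw [Complex.tsum_exp_neg_quadratic (by simpa using hz)]
  rw [norm_mul]
  have h1 : ‖1 / (2 * z) ^ (1 / 2 : ℂ)‖ ≤ (Real.sqrt ‖z‖)⁻¹ := by
    rw [norm_div, norm_one, one_div]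
    have : ‖(2 * z) ^ (1 / 2 : ℂ)‖ = Real.sqrt (2 * ‖z‖) := by
      rw [show (1 / 2 : ℂ) = ((1 / 2 : ℝ) : ℂ) by push_cast; ring, Complex.norm_cpow_real, Real.sqrt_eq_rpow]
      simp
    rw [this]
    have : 0 < ‖z‖ := norm_pos_iff.2 hz0
    have h2 : 0 < Real.sqrt ‖z‖ := Real.sqrt_pos.2 this
    gcongr
    linarith
  have hn : ∀ n : ℤ, ‖Complex.exp (-π / (2 * z) * ((n : ℂ) + Complex.I * (-Complex.I * β)) ^ 2)‖ =
      Real.exp (-π * (z.re / (2 * ‖z‖ ^ 2)) * ((n : ℝ) + β) ^ 2) := by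
    intro n
    rw [Complex.norm_exp]
    congr 1
    have h3 : -π / (2 * z) * ((n : ℂ) + Complex.I * (-Complex.I * β)) ^ 2 =
        ((-π / 2 * ((n : ℝ) + β) ^ 2 : ℝ) : ℂ) * z⁻¹ := by
      have : Complex.I * (-Complex.I * β) = β := by
        linear_combination (-(β : ℂ)) * Complex.I_sq
      rw [this]
      push_cast
      field_simp
    rw [h3, Complex.re_ofReal_mul, Complex.inv_re, Complex.normSq_eq_norm_sq]
    ring
  have h2 : ‖∑' n : ℤ, Complex.exp (-π / (2 * z) * ((n : ℂ) + Complex.I * (-Complex.I * β)) ^ 2)‖ ≤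
      ∑' n : ℤ, Real.exp (-π * (z.re / (2 * ‖z‖ ^ 2)) * ((n : ℝ) + β) ^ 2) := by
    rw [← tsum_congr hn]
    apply norm_tsum_le_tsum_norm
    simp only [hn]; exact hs
  exact mul_le_mul h1 h2 (norm_nonneg _) (by positivity)

lemma theta_bound : ∃ K : ℝ, 0 < K ∧ ∀ (ε τ : ℝ) (q : ℕ) (a : ℤ) (α D : ℝ), 0 < ε → 0 < q →
    IsCoprime a (q : ℤ) → (q : ℝ) ^ 2 * (ε ^ 2 + τ ^ 2) ≤ 2 * ε → 0 ≤ D →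
    (∀ m : ℤ, D ≤ |α - m / q|) →
    ‖∑' m : ℤ, Complex.exp (-(2 * π) * ((ε : ℂ) - Complex.I * ((a : ℝ) / q + τ : ℝ)) * (m : ℂ) ^ 2 +
      2 * π * (-Complex.I * α) * m)‖ ≤
    K * (Real.sqrt q)⁻¹ * (Real.sqrt (Real.sqrt (ε ^ 2 + τ ^ 2)))⁻¹ *
      Real.exp (-(π / 4) * D ^ 2 * (ε / (ε ^ 2 + τ ^ 2))) := by
  obtain ⟨K, hK, hKb⟩ := gauss_shift (c := 1 / 8) (by norm_num)
  refine ⟨Real.sqrt 2 * K, by positivity, ?_⟩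
  intro ε τ q a α D hε hq hco hqe hD hDm
  haveI : NeZero q := ⟨hq.ne'⟩
  have hqR : (0 : ℝ) < q := by exact_mod_cast hq
  set R := ε ^ 2 + τ ^ 2 with hR
  have hRp : 0 < R := by positivity
  set z : ℂ := (ε : ℂ) - Complex.I * τ with hz
  have hzre : z.re = ε := by simp [hz]
  have hznorm : ‖z‖ ^ 2 = R := by
    rw [← Complex.normSq_eq_norm_sq, Complex.normSq_apply]
    simp [hz, hR]; ring
  have hznorm2 : ‖z‖ = Real.sqrt R := by
    rw [← hznorm, Real.sqrt_sq (norm_nonneg _)]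
  set c := ε / (2 * R) with hc
  have hcp : 0 < c := by positivity
  have hcq : (q : ℝ) ^ 2 / 4 ≤ c := by
    rw [hc, le_div_iff₀ (by positivity)]; nlinarith
  set H : ℤ → ℝ := fun m => Real.exp (-π * c * ((m : ℝ) / q + α) ^ 2) with hH
  have hHle : ∀ m : ℤ, H m ≤ Real.exp (-(π / 4) * D ^ 2 * (ε / R)) *
      Real.exp (-π * (1 / 8) * ((m : ℝ) - (-(q * α))) ^ 2) := by
    intro m
    rw [← Real.exp_add]
    apply Real.exp_le_exp.2
    have h1 : D ^ 2 ≤ ((m : ℝ) / q + α) ^ 2 := by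
      have := hDm (-m)
      push_cast at this
      rw [show α - -(m : ℝ) / q = (m : ℝ) / q + α by ring] at this
      calc D ^ 2 ≤ |(m : ℝ) / q + α| ^ 2 := by gcongr
        _ = _ := sq_abs _
    have h2 : ((m : ℝ) - (-(q * α))) ^ 2 = q ^ 2 * ((m : ℝ) / q + α) ^ 2 := by
      field_simp; ring
    have h3 : ε / R = 2 * c := by rw [hc]; field_simp
    rw [h2, h3]
    have hX : 0 ≤ ((m : ℝ) / q + α) ^ 2 := sq_nonneg _
    set X := ((m : ℝ) / q + α) ^ 2
    have e1 : c * D ^ 2 ≤ c * X := by gcongr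
    have e2 : (q : ℝ) ^ 2 / 4 * X ≤ c * X := by gcongr
    have : c * D ^ 2 / 2 + (q : ℝ) ^ 2 * X / 8 ≤ c * X := by linarith
    nlinarith [Real.pi_pos]
  obtain ⟨hg1, hg2⟩ := hKb (-(q * α))
  have hHs : Summable H := Summable.of_nonneg_of_le (fun _ => (Real.exp_pos _).le) hHle (hg1.mul_left _)
  have hHt : ∑' m, H m ≤ Real.exp (-(π / 4) * D ^ 2 * (ε / R)) * K := by
    refine (hHs.tsum_le_tsum hHle (hg1.mul_left _)).trans ?_
    rw [tsum_mul_left]; gcongr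
  set E : ℝ → ℤ → ℂ := fun β m =>
    Complex.exp (-π * (2 * z) * (m : ℂ) ^ 2 + 2 * π * (-Complex.I * β) * m) with hE
  have hz0 : 0 < z.re := by rw [hzre]; exact hε
  have hrw : ∀ m : ℤ, Complex.exp (-(2 * π) * ((ε : ℂ) - Complex.I * ((a : ℝ) / q + τ : ℝ)) * (m : ℂ) ^ 2 +
      2 * π * (-Complex.I * α) * m) = ∑ l : ZMod q, GS q (a : ZMod q) l * E (α + l.val / q) m := by
    intro m
    have h1 : Complex.exp (-(2 * π) * ((ε : ℂ) - Complex.I * ((a : ℝ) / q + τ : ℝ)) * (m : ℂ) ^ 2 +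
      2 * π * (-Complex.I * α) * m) = (ZMod.stdAddChar ((a : ZMod q) * (m : ZMod q) ^ 2) : ℂ) * E α m := by
      have : (a : ZMod q) * (m : ZMod q) ^ 2 = ((a * m ^ 2 : ℤ) : ZMod q) := by push_cast; rfl
      rw [this, ZMod.stdAddChar_coe, hE, ← Complex.exp_add]
      congr 1
      rw [hz]; push_cast; ring
    rw [h1, GS_inv, Finset.sum_mul]
    apply Finset.sum_congr rfl
    intro l _
    rw [mul_assoc]
    congr 1
    have : -(l * (m : ZMod q)) = ((-(l.val * m) : ℤ) : ZMod q) := by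
      push_cast; rw [ZMod.natCast_zmod_val]
    rw [this, ZMod.stdAddChar_coe, hE, ← Complex.exp_add]
    congr 1
    push_cast; ring
  have hEs : ∀ β, Summable (E β) := fun β => theta_summable hz0 β
  rw [tsum_congr hrw, Summable.tsum_finsetSum (fun l _ => (hEs _).mul_left _)]
  have hH2 : ∀ (i : ℕ) (n : ℤ), H (n * q + i) =
      Real.exp (-π * (z.re / (2 * ‖z‖ ^ 2)) * ((n : ℝ) + (α + (i : ℝ) / q)) ^ 2) := by
    intro i n
    rw [hH, hzre, hznorm, hc]
    simp only
    congr 2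
    push_cast
    field_simp
    ring
  have hterm : ∀ l : ZMod q, ‖∑' m, GS q (a : ZMod q) l * E (α + l.val / q) m‖ ≤
      Real.sqrt 2 / Real.sqrt q * ((Real.sqrt (Real.sqrt R))⁻¹ * ∑' n : ℤ, H (n * q + l.val)) := by
    intro l
    rw [tsum_mul_left, norm_mul]
    have hu : IsUnit (a : ZMod q) := by
      rwa [ZMod.coe_int_isUnit_iff_isCoprime, isCoprime_comm]
    refine mul_le_mul (GS_norm q _ _ hu) ?_ (norm_nonneg _) (by positivity)
    have := theta_one hz0 (α + l.val / q) (by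
      have h5 : Summable (fun n : ℤ => H (n * q + l.val)) := by
        apply hHs.comp_injective (i := fun n : ℤ => n * q + l.val)
        intro x y hxy
        simpa [hq.ne'] using hxy
      simpa only [hH2] using h5)
    simp only [hH2]
    rw [hznorm2] at this ⊢
    exact this
  calc _ ≤ ∑ l : ZMod q, Real.sqrt 2 / Real.sqrt q *
        ((Real.sqrt (Real.sqrt R))⁻¹ * ∑' n : ℤ, H (n * q + l.val)) :=
        (norm_sum_le _ _).trans (Finset.sum_le_sum fun l _ => hterm l)
    _ = Real.sqrt 2 / Real.sqrt q * (Real.sqrt (Real.sqrt R))⁻¹ * ∑' m, H m := by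
        rw [← tsum_divMod q H hHs, ← sum_zmod_val q (fun i => ∑' n : ℤ, H (n * q + i)), Finset.mul_sum]
        apply Finset.sum_congr rfl
        intro l _; ring
    _ ≤ Real.sqrt 2 / Real.sqrt q * (Real.sqrt (Real.sqrt R))⁻¹ *
        (Real.exp (-(π / 4) * D ^ 2 * (ε / R)) * K) := by gcongr
    _ = _ := by rw [div_eq_mul_inv]; ring

lemma tsum_pi_prod (d : ℕ) : ∀ (g : Fin d → ℤ → ℂ), (∀ i, Summable (fun m => ‖g i m‖)) →
    Summable (fun m : Fin d → ℤ => ‖∏ i, g i (m i)‖) ∧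
    ∑' m : Fin d → ℤ, ∏ i, g i (m i) = ∏ i, ∑' m, g i m := by
  induction d with
  | zero =>
    intro g _
    constructor
    · exact Summable.of_finite
    · simp [tsum_fintype]
  | succ d ih =>
    intro g hg
    obtain ⟨h1, h2⟩ := ih (fun i => g i.succ) (fun i => hg i.succ)
    have hs := (hg 0).mul_norm h1
    set e := Fin.consEquiv (fun _ : Fin (d + 1) => ℤ) with he
    have hp : ∀ p : ℤ × (Fin d → ℤ), ∏ i, g i (e p i) = g 0 p.1 * ∏ i : Fin d, g i.succ (p.2 i) := by
      intro p
      rw [Fin.prod_univ_succ]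
      simp [he, Fin.consEquiv]
    constructor
    · rw [← e.summable_iff]
      refine hs.congr ?_
      intro p
      simp only [Function.comp_apply, hp]
    · rw [← e.tsum_eq, Fin.prod_univ_succ, ← h2, tsum_mul_tsum_of_summable_norm (hg 0) h1]
      exact tsum_congr hp

/-- the exponential weight -/
def wt {d : ℕ} (k : ℕ) (t : ℝ) (m : Fin d → ℤ) : ℂ :=
  Complex.exp (-(2 * π) * ((((4 : ℝ) ^ k)⁻¹ : ℝ) - Complex.I * (t : ℝ)) * (∑ i, (m i : ℂ) ^ 2))

def E1d (k : ℕ) (t α : ℝ) (m : ℤ) : ℂ :=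
  Complex.exp (-(2 * π) * (((((4 : ℝ) ^ k)⁻¹ : ℝ) : ℂ) - Complex.I * (t : ℝ)) * (m : ℂ) ^ 2 +
      2 * π * (-Complex.I * α) * m)

lemma wt_chr {d : ℕ} (k : ℕ) (t : ℝ) (α : Fin d → ℝ) (m : Fin d → ℤ) :
    wt k t m * chr α m = ∏ i, E1d k t (α i) (m i) := by
  simp only [wt, chr, E1d]
  rw [← Complex.exp_add, ← Complex.exp_sum]
  congr 1
  rw [Finset.sum_add_distrib, ← Finset.mul_sum]
  congr 1
  push_cast
  rw [Finset.mul_sum]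
  apply Finset.sum_congr rfl
  intro i _
  ring

lemma E1d_summable (k : ℕ) (t α : ℝ) : Summable (fun m => ‖E1d k t α m‖) := by
  have h := theta_summable (z := (((((4 : ℝ) ^ k)⁻¹ : ℝ) : ℂ) - Complex.I * (t : ℝ))) (by rw [Complex.sub_re, Complex.ofReal_re]; simp) α
  refine h.norm.congr ?_
  intro m
  rw [E1d]
  congr 3
  ring

lemma wt_summable {d : ℕ} (k : ℕ) (t : ℝ) : Summable (fun m : Fin d → ℤ => ‖wt k t m‖) := by
  have h := (tsum_pi_prod d (fun _ => E1d k t 0) (fun i => E1d_summable k t 0)).1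
  refine h.congr ?_
  intro m
  have := wt_chr k t (fun _ => 0) m
  rw [← this]
  simp [chr]

/-- decay profile -/
def prof (u : ℝ) : ℝ := ((Real.sqrt (Real.sqrt (1 + u ^ 2)))⁻¹) ^ 3

def gam (j q : ℕ) : ℝ := if q ∣ qlcm j then 2 / 2 ^ j else 1

def Mfun (k j : ℕ) (t : ℝ) : ℝ :=
  ∑ q ∈ Finset.Icc 1 (2 ^ k), ∑ a ∈ Finset.range (q + 1),
    gam j q * ((Real.sqrt q)⁻¹) ^ 5 * prof ((t - a / q) * 4 ^ k)

lemma gam_pos (j q : ℕ) : 0 < gam j q := by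
  unfold gam; split_ifs <;> positivity

lemma prof_pos (u : ℝ) : 0 < prof u := by
  unfold prof; positivity

lemma exp_gain (j : ℕ) (v : ℝ) (hv : 0 < v) :
    Real.exp (-(π / 4) * ((2 : ℝ) ^ j / v ^ 2) ^ 2) ≤ 2 / 2 ^ j * v ^ 2 := by
  set y := (2 : ℝ) ^ j / v ^ 2 with hy
  have hyp : 0 < y := by positivity
  have : 2 / (2 : ℝ) ^ j * v ^ 2 = 2 / y := by rw [hy]; field_simp
  rw [this, le_div_iff₀ hyp, neg_mul, Real.exp_neg, inv_mul_le_iff₀ (Real.exp_pos _)]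
  have h1 := Real.add_one_le_exp (π / 4 * y ^ 2)
  have h2 := Real.pi_gt_three
  have h3 : 3 / 4 * y ^ 2 ≤ π / 4 * y ^ 2 := by gcongr
  nlinarith [sq_nonneg (y - 1)]

lemma inv_pow_le {x : ℝ} (hx : 1 ≤ x) {a b : ℕ} (h : a ≤ b) : (x⁻¹) ^ b ≤ (x⁻¹) ^ a :=
  pow_le_pow_of_le_one (by positivity) (inv_le_one_of_one_le₀ hx) h

lemma omega_gap {d j k q : ℕ} (hq : q ∣ qlcm j) (hQ : qlcm j ≠ 0) (hq0 : 0 < q) {α : Fin d → ℝ}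
    (hα : α ∉ OmegaJK d j k) : ∃ i, ∀ m : ℤ, (2 : ℝ) ^ ((j : ℤ) - (k : ℤ)) ≤ |α i - m / q| := by
  by_contra hcon
  push Not at hcon
  choose m hm using hcon
  apply hα
  obtain ⟨c, hc⟩ := hq
  refine ⟨fun i => m i * c, fun i => ?_⟩
  have : ((m i * (c : ℤ) : ℤ) : ℝ) / (qlcm j : ℝ) = m i / q := by
    have hc0 : (c : ℝ) ≠ 0 := by
      rintro h
      apply hQ
      have : c = 0 := by exact_mod_cast h
      rw [hc, this, mul_zero]
    have : (q : ℝ) ≠ 0 := by positivity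
    rw [hc]; push_cast; field_simp
  rw [this]
  exact (hm i).le

lemma qlcm_ne_zero (j : ℕ) : qlcm j ≠ 0 := by
  unfold qlcm
  rw [Ne, Finset.lcm_eq_zero_iff]
  simp

lemma mult_bound (d : ℕ) (hd : 5 ≤ d) : ∃ C : ℝ, 0 < C ∧ ∀ (k j : ℕ) (t : ℝ), 0 ≤ t → t ≤ 1 →
    ∀ α : Fin d → ℝ, α ∉ OmegaJK d j k →
    ‖∑' m : Fin d → ℤ, wt k t m * chr α m‖ ≤ C * (2 ^ k) ^ d * Mfun k j t := by
  obtain ⟨K, hK, hKb⟩ := theta_bound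
  refine ⟨K ^ d, by positivity, ?_⟩
  intro k j t ht0 ht1 α hα
  obtain ⟨r, hr1, hr2⟩ := Real.exists_rat_abs_sub_le_and_den_le t (n := 2 ^ k) (by positivity)
  set q := r.den with hqdef
  set a := r.num with hadef
  have hq0 : 0 < q := r.den_pos
  have hq0R : (0 : ℝ) < q := by exact_mod_cast hq0
  have hq1R : (1 : ℝ) ≤ q := by exact_mod_cast hq0
  have hra : (r : ℝ) = (a : ℝ) / q := Rat.cast_def r
  set τ := t - (a : ℝ) / q with hτ
  have hτb : |τ| ≤ 1 / (((2 : ℝ) ^ k + 1) * q) := by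
    rw [hra] at hr1
    push_cast at hr1
    exact hr1
  have hN : (0 : ℝ) < 2 ^ k := by positivity
  have hqN : (q : ℝ) ≤ 2 ^ k := by exact_mod_cast hr2
  have hco : IsCoprime a (q : ℤ) := by
    rw [Int.isCoprime_iff_gcd_eq_one]
    exact r.reduced
  have h4 : (4 : ℝ) ^ k = (2 ^ k) ^ 2 := by
    rw [← pow_mul, mul_comm, pow_mul]; norm_num
  set N : ℝ := 2 ^ k with hNdef
  set ε : ℝ := (4 ^ k)⁻¹ with hε
  have hεN : ε = (N ^ 2)⁻¹ := by rw [hε, h4]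
  have hεp : 0 < ε := by positivity
  have hqτ : (q : ℝ) * |τ| < 1 / N := by
    calc (q : ℝ) * |τ| ≤ q * (1 / ((N + 1) * q)) := by gcongr
      _ = 1 / (N + 1) := by field_simp
      _ < 1 / N := by gcongr; linarith
  have hqe : (q : ℝ) ^ 2 * (ε ^ 2 + τ ^ 2) ≤ 2 * ε := by
    have h1 : (q : ℝ) ^ 2 * τ ^ 2 ≤ ε := by
      rw [← sq_abs τ, ← mul_pow, hεN, ← inv_pow, ← one_div]
      gcongr
    have h2 : (q : ℝ) ^ 2 * ε ^ 2 ≤ ε := by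
      have : (q : ℝ) ^ 2 * ε ≤ 1 := by
        rw [hεN, ← div_eq_mul_inv, div_le_one (by positivity)]
        gcongr
      nlinarith
    linarith
  have hqt : (q : ℝ) * |τ| < 1 := by
    have : (1 : ℝ) ≤ N := one_le_pow₀ (by norm_num)
    have : 1 / N ≤ 1 := by rw [div_le_one hN]; exact this
    linarith
  have hqt2 : |(q : ℝ) * t - a| < 1 := by
    have : (q : ℝ) * t - a = q * τ := by rw [hτ]; field_simp
    rw [this, abs_mul, abs_of_pos hq0R]; exact hqt
  rw [abs_lt] at hqt2
  have ha0 : 0 ≤ a := by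
    have : (-1 : ℝ) < a := by nlinarith [mul_nonneg hq0R.le ht0]
    have : -1 < a := by exact_mod_cast this
    omega
  have ha1 : a ≤ q := by
    have : (a : ℝ) < q + 1 := by nlinarith
    have : a < q + 1 := by exact_mod_cast this
    omega
  -- the profile
  set u := τ * 4 ^ k with hu
  set v := Real.sqrt (Real.sqrt (1 + u ^ 2)) with hv
  have hv1 : 1 ≤ v := by
    rw [hv]
    apply Real.one_le_sqrt.2
    apply Real.one_le_sqrt.2
    nlinarith [sq_nonneg u]
  have hvp : 0 < v := by linarith
  have hRu : ε ^ 2 + τ ^ 2 = ε ^ 2 * (1 + u ^ 2) := by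
    rw [hu, hε]; field_simp
  have hv4 : v ^ 4 = 1 + u ^ 2 := by
    rw [hv, show (4 : ℕ) = 2 * 2 by norm_num, pow_mul, Real.sq_sqrt (by positivity), Real.sq_sqrt (by positivity)]
  have hRv : Real.sqrt (Real.sqrt (ε ^ 2 + τ ^ 2)) = v / N := by
    rw [hRu, Real.sqrt_mul (by positivity), Real.sqrt_mul (by positivity), Real.sqrt_sq hεp.le, ← hv, hεN,
      Real.sqrt_inv, Real.sqrt_sq hN.le]
    field_simp
  have hsq : 1 ≤ Real.sqrt q := Real.one_le_sqrt.2 hq1R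
  set B := K * (Real.sqrt q)⁻¹ * (v / N)⁻¹ with hB
  have hBp : 0 < B := by positivity
  have hfac : ∀ (β D : ℝ), 0 ≤ D → (∀ m : ℤ, D ≤ |β - m / q|) →
      ‖∑' m : ℤ, E1d k t β m‖ ≤ B * Real.exp (-(π / 4) * D ^ 2 * (ε / (ε ^ 2 + τ ^ 2))) := by
    intro β D hD hDm
    have := hKb ε τ q a β D hεp hq0 hco hqe hD hDm
    rw [hRv] at this
    rw [show (a : ℝ) / q + τ = t by rw [hτ]; ring] at this
    exact this
  have hfac0 : ∀ β : ℝ, ‖∑' m : ℤ, E1d k t β m‖ ≤ B := by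
    intro β
    have := hfac β 0 le_rfl (fun _ => abs_nonneg _)
    simpa using this
  have hprod : ‖∑' m : Fin d → ℤ, wt k t m * chr α m‖ = ∏ i, ‖∑' m : ℤ, E1d k t (α i) m‖ := by
    rw [tsum_congr (wt_chr k t α), (tsum_pi_prod d (fun i => E1d k t (α i)) (fun i => E1d_summable k t _)).2,
      norm_prod]
  have hBd : B ^ d ≤ K ^ d * N ^ d * ((Real.sqrt q)⁻¹ ^ 5 * (v⁻¹) ^ 5) := by
    have : B ^ d = K ^ d * N ^ d * ((Real.sqrt q)⁻¹ ^ d * (v⁻¹) ^ d) := by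
      rw [← mul_pow, ← mul_pow, ← mul_pow, hB]; congr 1; field_simp
    rw [this]
    have h1 := inv_pow_le hsq hd
    have h2 := inv_pow_le hv1 hd
    gcongr
  have hmain : ‖∑' m : Fin d → ℤ, wt k t m * chr α m‖ ≤
      K ^ d * N ^ d * (gam j q * (Real.sqrt q)⁻¹ ^ 5 * prof u) := by
    rw [hprod]
    unfold gam
    split_ifs with hdiv
    · obtain ⟨i, hi⟩ := omega_gap hdiv (qlcm_ne_zero j) hq0 hα
      have hg := hfac (α i) _ (by positivity) hi
      have hexp : Real.exp (-(π / 4) * ((2 : ℝ) ^ ((j : ℤ) - (k : ℤ))) ^ 2 * (ε / (ε ^ 2 + τ ^ 2))) ≤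
          2 / 2 ^ j * v ^ 2 := by
        refine le_trans (le_of_eq ?_) (exp_gain j v hvp)
        congr 1
        rw [hRu, ← hv4, zpow_sub₀ (by norm_num), zpow_natCast, zpow_natCast, ← hNdef, hεN]
        field_simp
      rw [← Finset.mul_prod_erase _ _ (Finset.mem_univ i)]
      have hrest : ∏ x ∈ Finset.univ.erase i, ‖∑' m : ℤ, E1d k t (α x) m‖ ≤ B ^ (d - 1) := by
        calc _ ≤ ∏ x ∈ Finset.univ.erase i, B :=
              Finset.prod_le_prod (fun _ _ => norm_nonneg _) (fun x _ => hfac0 _)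
          _ = B ^ (d - 1) := by
              rw [Finset.prod_const, Finset.card_erase_of_mem (Finset.mem_univ _), Finset.card_univ, Fintype.card_fin]
      calc _ ≤ (B * (2 / 2 ^ j * v ^ 2)) * B ^ (d - 1) := by
            refine mul_le_mul (hg.trans ?_) hrest (Finset.prod_nonneg fun _ _ => norm_nonneg _) (by positivity)
            gcongr
        _ = B ^ d * (2 / 2 ^ j * v ^ 2) := by
            obtain ⟨d', rfl⟩ : ∃ d', d = d' + 1 := ⟨d - 1, by omega⟩
            rw [Nat.add_sub_cancel, pow_succ]; ring
        _ ≤ (K ^ d * N ^ d * ((Real.sqrt q)⁻¹ ^ 5 * (v⁻¹) ^ 5)) * (2 / 2 ^ j * v ^ 2) := by gcongr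
        _ = _ := by
            rw [prof, ← hv]
            field_simp
    · calc _ ≤ ∏ i : Fin d, B := Finset.prod_le_prod (fun _ _ => norm_nonneg _) (fun x _ => hfac0 _)
        _ = B ^ d := by simp
        _ ≤ _ := hBd
        _ ≤ _ := by
            rw [prof, ← hv, one_mul]
            have := inv_pow_le hv1 (show 3 ≤ 5 by norm_num)
            gcongr
  refine hmain.trans ?_
  have hnn : ∀ (q' a' : ℕ), 0 ≤ gam j q' * ((Real.sqrt q')⁻¹) ^ 5 * prof ((t - a' / q') * 4 ^ k) := by
    intro q' a'
    have := gam_pos j q'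
    have := prof_pos ((t - a' / q') * 4 ^ k)
    positivity
  gcongr
  have hmem : q ∈ Finset.Icc 1 (2 ^ k) := Finset.mem_Icc.2 ⟨hq0, hr2⟩
  have hmem2 : a.toNat ∈ Finset.range (q + 1) := Finset.mem_range.2 (by omega)
  have hcast : ((a.toNat : ℕ) : ℝ) = (a : ℝ) := by
    have : ((a.toNat : ℕ) : ℤ) = a := Int.toNat_of_nonneg ha0
    exact_mod_cast this
  have := Finset.single_le_sum (f := fun a' : ℕ => gam j q * ((Real.sqrt q)⁻¹) ^ 5 * prof ((t - a' / q) * 4 ^ k))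
    (fun a' _ => hnn q a') hmem2
  rw [hcast, ← hτ, ← hu] at this
  refine this.trans ?_
  exact Finset.single_le_sum (f := fun q' : ℕ => ∑ a' ∈ Finset.range (q' + 1),
      gam j q' * ((Real.sqrt q')⁻¹) ^ 5 * prof ((t - a' / q') * 4 ^ k))
    (fun q' _ => Finset.sum_nonneg fun a' _ => hnn q' a') hmem

def s32 (n : ℕ) : ℝ := ((Real.sqrt n)⁻¹) ^ 3

lemma s32_nonneg (n : ℕ) : 0 ≤ s32 n := by unfold s32; positivity

lemma s32_mul (m n : ℕ) : s32 (m * n) = s32 m * s32 n := by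
  unfold s32
  rw [Nat.cast_mul, Real.sqrt_mul (by positivity), mul_inv, mul_pow]

lemma s32_anti {m n : ℕ} (hm : 0 < m) (h : m ≤ n) : s32 n ≤ s32 m := by
  unfold s32
  have : (0 : ℝ) < m := by exact_mod_cast hm
  have : 0 < Real.sqrt m := Real.sqrt_pos.2 this
  have : (m : ℝ) ≤ n := by exact_mod_cast h
  gcongr

lemma s32_summable : Summable s32 := by
  have h := Real.summable_nat_rpow_inv.2 (show (1 : ℝ) < 3 / 2 by norm_num)
  refine h.congr ?_
  intro n
  unfold s32
  rw [inv_pow, Real.sqrt_eq_rpow, ← Real.rpow_natCast, ← Real.rpow_mul (by positivity)]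
  norm_num

/-- `2^{-1/2}` -/
def rho : ℝ := (Real.sqrt 2)⁻¹

lemma rho_pos : 0 < rho := by unfold rho; positivity
lemma rho_sq : rho ^ 2 = 1 / 2 := by unfold rho; rw [inv_pow, Real.sq_sqrt (by norm_num)]; norm_num
lemma rho_lt : rho < 3 / 4 := by nlinarith [rho_sq, rho_pos]
lemma rho_sq_pow (m : ℕ) : (2 : ℝ) ^ m * (rho ^ m * rho ^ m) = 1 := by
  rw [← mul_pow, ← mul_pow, ← sq, rho_sq]; norm_num

lemma s32_two_pow (m : ℕ) : s32 (2 ^ m) = (rho ^ m) ^ 3 := by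
  unfold s32 rho
  congr 1
  push_cast
  rw [inv_pow]
  congr 1
  rw [show (2 : ℝ) ^ m = (Real.sqrt 2 ^ m) ^ 2 by
    rw [← pow_mul, mul_comm, pow_mul, Real.sq_sqrt (by norm_num)]]
  rw [Real.sqrt_sq (by positivity)]
  

lemma rho_lin (m : ℕ) : (m : ℝ) * rho ^ m ≤ 3 := by
  have h := one_add_mul_le_pow (show (-2 : ℝ) ≤ Real.sqrt 2 - 1 by
    have := Real.sqrt_nonneg 2; linarith) m
  have h2 : (1.4 : ℝ) ≤ Real.sqrt 2 := by
    apply Real.le_sqrt_of_sq_le; norm_num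
  rw [add_sub_cancel] at h
  unfold rho
  rw [inv_pow, ← div_eq_mul_inv, div_le_iff₀ (by positivity)]
  have : (m : ℝ) * 0.4 ≤ m * (Real.sqrt 2 - 1) := by gcongr; linarith
  linarith

lemma primes_card (m : ℕ) (hm : 1 ≤ m) :
    ((((Finset.range (2 ^ m + 1)).filter Nat.Prime).card : ℕ) : ℝ) ≤ 7 * 2 ^ m / m := by
  have h := Chebyshev.pi_le_log4_mul_div (x := (2 : ℝ) ^ m) (one_lt_pow₀ (by norm_num) (by omega))
  have hfl : ⌊(2 : ℝ) ^ m⌋₊ = 2 ^ m := by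
    have : (2 : ℝ) ^ m = ((2 ^ m : ℕ) : ℝ) := by push_cast; rfl
    rw [this, Nat.floor_natCast]
  rw [hfl] at h
  have hc : Nat.primeCounting (2 ^ m) = ((Finset.range (2 ^ m + 1)).filter Nat.Prime).card := by
    rw [Nat.primeCounting, Nat.primeCounting', Nat.count_eq_card_filter_range]
  rw [← hc]
  refine h.trans ?_
  have hmR : (0 : ℝ) < m := by exact_mod_cast hm
  have hl2 : 0 < Real.log 2 := Real.log_pos (by norm_num)
  have h1 : Real.log (Real.sqrt (2 ^ m)) = m * Real.log 2 / 2 := by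
    rw [Real.log_sqrt (by positivity), Real.log_pow]
  have h2 : Real.log 4 = 2 * Real.log 2 := by
    rw [show (4 : ℝ) = 2 ^ 2 by norm_num, Real.log_pow]; norm_num
  have h3 : Real.sqrt (2 ^ m) = 2 ^ m * rho ^ m := by
    rw [show (2 : ℝ) ^ m = (Real.sqrt 2 ^ m) ^ 2 by
      rw [← pow_mul, mul_comm, pow_mul, Real.sq_sqrt (by norm_num)], Real.sqrt_sq (by positivity)]
    unfold rho
    rw [inv_pow]
    field_simp
  rw [h1, h2, h3]
  have h4 : 2 * Real.log 2 * 2 ^ m / (m * Real.log 2 / 2) = 4 * 2 ^ m / m := by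
    field_simp; norm_num
  rw [h4]
  have h5 : (2 : ℝ) ^ m * rho ^ m ≤ 3 * 2 ^ m / m := by
    rw [le_div_iff₀ hmR]
    have := rho_lin m
    calc (2 : ℝ) ^ m * rho ^ m * m = 2 ^ m * (m * rho ^ m) := by ring
      _ ≤ 2 ^ m * 3 := by gcongr
      _ = _ := by ring
  calc _ ≤ 4 * (2 : ℝ) ^ m / m + 3 * 2 ^ m / m := by gcongr
    _ = _ := by ring

/-- minimal power of `p` exceeding `2^j` -/
def Pp (j p : ℕ) : ℕ := p ^ (Nat.log p (2 ^ j) + 1)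

lemma Pp_gt (j : ℕ) {p : ℕ} (hp : p.Prime) : 2 ^ j < Pp j p := Nat.lt_pow_succ_log_self hp.one_lt _

lemma Pp_ge (j : ℕ) {p : ℕ} (hp : p.Prime) : p ≤ Pp j p := Nat.le_self_pow (by omega) p

lemma exists_Pp {j q : ℕ} (hq : ¬ q ∣ qlcm j) : ∃ p, p.Prime ∧ Pp j p ∣ q := by
  rw [Nat.dvd_iff_prime_pow_dvd_dvd] at hq
  push Not at hq
  obtain ⟨p, a, hp, h1, h2⟩ := hq
  refine ⟨p, hp, ?_⟩
  have h3 : 2 ^ j < p ^ a := by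
    by_contra hcon
    push Not at hcon
    apply h2
    have : p ^ a ∈ Finset.Icc 1 (2 ^ j) := Finset.mem_Icc.2 ⟨Nat.pos_of_ne_zero (pow_ne_zero _ hp.ne_zero), hcon⟩
    exact Finset.dvd_lcm (f := id) this
  refine (pow_dvd_pow p ?_).trans h1
  exact Nat.log_lt_of_lt_pow (by positivity) h3

lemma sum_Pp (j : ℕ) (hj : 1 ≤ j) (L : ℕ) :
    ∑ p ∈ (Finset.range (2 ^ (j + L) + 1)).filter Nat.Prime, s32 (Pp j p) ≤
      7 * rho ^ j / j * (1 + 2 * ∑ i ∈ Finset.range L, rho ^ i) := by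
  have hjR : (0 : ℝ) < j := by exact_mod_cast hj
  have hr := rho_pos
  induction L with
  | zero =>
    simp only [add_zero, Finset.range_zero, Finset.sum_empty, mul_zero, mul_one]
    have h1 : ∀ p ∈ (Finset.range (2 ^ j + 1)).filter Nat.Prime, s32 (Pp j p) ≤ (rho ^ j) ^ 3 := by
      intro p hp
      rw [← s32_two_pow]
      exact s32_anti (by positivity) (Pp_gt j (Finset.mem_filter.1 hp).2).le
    refine (Finset.sum_le_card_nsmul _ _ _ h1).trans ?_
    rw [nsmul_eq_mul]
    calc _ ≤ (7 * 2 ^ j / j : ℝ) * (rho ^ j) ^ 3 := by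
          gcongr; exact primes_card j hj
      _ = 7 * rho ^ j / j * (2 ^ j * (rho ^ j * rho ^ j)) := by ring
      _ = _ := by rw [rho_sq_pow, mul_one]
  | succ L ih =>
    set T := (Finset.range (2 ^ (j + (L + 1)) + 1)).filter Nat.Prime with hT
    set T0 := (Finset.range (2 ^ (j + L) + 1)).filter Nat.Prime with hT0
    have hle : 2 ^ (j + L) ≤ 2 ^ (j + (L + 1)) := Nat.pow_le_pow_right (by norm_num) (by omega)
    have hsub : T0 ⊆ T := by
      intro p hp
      simp only [hT, hT0, Finset.mem_filter, Finset.mem_range] at hp ⊢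
      exact ⟨by omega, hp.2⟩
    rw [← Finset.sum_sdiff hsub]
    have h1 : ∀ p ∈ T \ T0, s32 (Pp j p) ≤ (rho ^ (j + L)) ^ 3 := by
      intro p hp
      simp only [hT, hT0, Finset.mem_sdiff, Finset.mem_filter, Finset.mem_range, not_and] at hp
      rw [← s32_two_pow]
      apply s32_anti (by positivity)
      refine le_trans ?_ (Pp_ge j hp.1.2)
      by_contra hcon
      exact hp.2 (by omega) hp.1.2
    have h2 : ∑ p ∈ T \ T0, s32 (Pp j p) ≤ 7 * rho ^ j / j * (2 * rho ^ L) := by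
      refine (Finset.sum_le_card_nsmul _ _ _ h1).trans ?_
      rw [nsmul_eq_mul]
      have hcard : (((T \ T0).card : ℕ) : ℝ) ≤ 7 * 2 ^ (j + L + 1) / j := by
        have ha : (((T \ T0).card : ℕ) : ℝ) ≤ T.card := by
          exact_mod_cast Finset.card_le_card Finset.sdiff_subset
        refine ha.trans ((primes_card (j + (L + 1)) (by omega)).trans ?_)
        rw [← add_assoc]
        gcongr
        omega
      calc _ ≤ (7 * 2 ^ (j + L + 1) / j : ℝ) * (rho ^ (j + L)) ^ 3 := by gcongr
        _ = 7 * rho ^ j / j * (2 * rho ^ L) * (2 ^ (j + L) * (rho ^ (j + L) * rho ^ (j + L))) := by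
            rw [pow_succ]; ring
        _ = _ := by rw [rho_sq_pow, mul_one]
    rw [Finset.sum_range_succ]
    calc _ ≤ 7 * rho ^ j / j * (2 * rho ^ L) + 7 * rho ^ j / j * (1 + 2 * ∑ i ∈ Finset.range L, rho ^ i) :=
          add_le_add h2 ih
      _ = _ := by ring

lemma sum_Pp' (j : ℕ) (hj : 1 ≤ j) (L : ℕ) :
    ∑ p ∈ (Finset.range (2 ^ (j + L) + 1)).filter Nat.Prime, s32 (Pp j p) ≤ 63 * rho ^ j / j := by
  refine (sum_Pp j hj L).trans ?_
  have hr := rho_pos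
  have hr2 := rho_lt
  have h1 : ∑ i ∈ Finset.range L, rho ^ i ≤ 4 := by
    have h := geom_sum_mul_neg rho L
    have : 0 < rho ^ L := by positivity
    have hs : 0 ≤ ∑ i ∈ Finset.range L, rho ^ i := Finset.sum_nonneg fun _ _ => by positivity
    nlinarith
  calc _ ≤ 7 * rho ^ j / j * (1 + 2 * 4) := by gcongr
    _ = _ := by ring

lemma sum_gam : ∃ C : ℝ, 0 < C ∧ ∀ (j N : ℕ), 1 ≤ j →
    ∑ q ∈ Finset.Icc 1 N, gam j q * s32 q ≤ C * (rho ^ j / j) := by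
  classical
  set Z := ∑' n, s32 n with hZ
  have hZ0 : 0 ≤ Z := tsum_nonneg s32_nonneg
  have hZf : ∀ s : Finset ℕ, ∑ n ∈ s, s32 n ≤ Z := fun s => s32_summable.sum_le_tsum s (fun n _ => s32_nonneg n)
  refine ⟨69 * Z + 1, by positivity, ?_⟩
  intro j N hj
  have hjR : (0 : ℝ) < j := by exact_mod_cast hj
  have hr := rho_pos
  have hsplit : ∀ q ∈ Finset.Icc 1 N, gam j q * s32 q ≤
      2 / 2 ^ j * s32 q + ∑ p ∈ (Finset.range (2 ^ (j + N) + 1)).filter Nat.Prime,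
        if Pp j p ∣ q then s32 q else 0 := by
    intro q hq
    rw [Finset.mem_Icc] at hq
    have hs := s32_nonneg q
    have hnn : ∀ p, 0 ≤ if Pp j p ∣ q then s32 q else 0 := by
      intro p; split_ifs <;> simp [hs]
    unfold gam
    split_ifs with hdiv
    · have : 0 ≤ ∑ p ∈ (Finset.range (2 ^ (j + N) + 1)).filter Nat.Prime,
        if Pp j p ∣ q then s32 q else 0 := Finset.sum_nonneg fun p _ => hnn p
      linarith
    · obtain ⟨p, hp, hpq⟩ := exists_Pp hdiv
      have hmem : p ∈ (Finset.range (2 ^ (j + N) + 1)).filter Nat.Prime := by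
        rw [Finset.mem_filter, Finset.mem_range]
        refine ⟨?_, hp⟩
        have h1 : p ≤ N := (Pp_ge j hp).trans ((Nat.le_of_dvd (by omega) hpq).trans hq.2)
        have h2 : N < 2 ^ N := Nat.lt_two_pow_self
        have h3 : 2 ^ N ≤ 2 ^ (j + N) := Nat.pow_le_pow_right (by norm_num) (by omega)
        omega
      have := Finset.single_le_sum (f := fun p => if Pp j p ∣ q then s32 q else 0) (fun p _ => hnn p) hmem
      simp only [hpq, if_true] at this
      have h0 : 0 ≤ 2 / (2 : ℝ) ^ j * s32 q := by positivity
      linarith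
  refine (Finset.sum_le_sum hsplit).trans ?_
  rw [Finset.sum_add_distrib, ← Finset.mul_sum, Finset.sum_comm]
  have hinner : ∀ p ∈ (Finset.range (2 ^ (j + N) + 1)).filter Nat.Prime,
      ∑ q ∈ Finset.Icc 1 N, (if Pp j p ∣ q then s32 q else 0) ≤ s32 (Pp j p) * Z := by
    intro p hp
    have hpp := (Finset.mem_filter.1 hp).2
    have hP : 0 < Pp j p := hpp.pos.trans_le (Pp_ge j hpp)
    rw [← Finset.sum_filter]
    have himg : (Finset.Icc 1 N).filter (fun q => Pp j p ∣ q) ⊆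
        (Finset.range (N + 1)).image (fun n => Pp j p * n) := by
      intro q hq
      rw [Finset.mem_filter, Finset.mem_Icc] at hq
      obtain ⟨⟨h1, h2⟩, c, rfl⟩ := hq
      rw [Finset.mem_image]
      refine ⟨c, Finset.mem_range.2 ?_, rfl⟩
      nlinarith
    refine (Finset.sum_le_sum_of_subset_of_nonneg himg (fun _ _ _ => s32_nonneg _)).trans ?_
    rw [Finset.sum_image (fun x _ y _ h => Nat.eq_of_mul_eq_mul_left hP h)]
    simp only [s32_mul]
    rw [← Finset.mul_sum]
    have := s32_nonneg (Pp j p)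
    gcongr
    exact hZf _
  have hA : 2 / (2 : ℝ) ^ j ≤ 6 * (rho ^ j / j) := by
    have h1 := rho_sq_pow j
    have h2 := rho_lin j
    have : 2 / (2 : ℝ) ^ j = 2 * (rho ^ j * rho ^ j) := by
      rw [div_eq_iff (by positivity)]; linarith
    rw [this, ← mul_div_assoc, le_div_iff₀ hjR]
    have : rho ^ j * (j * rho ^ j) ≤ rho ^ j * 3 := by gcongr
    linarith
  calc _ ≤ 6 * (rho ^ j / j) * Z +
        ∑ p ∈ (Finset.range (2 ^ (j + N) + 1)).filter Nat.Prime, s32 (Pp j p) * Z := by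
        refine add_le_add ?_ (Finset.sum_le_sum hinner)
        exact mul_le_mul hA (hZf _) (Finset.sum_nonneg fun _ _ => s32_nonneg _) (by positivity)
    _ ≤ 6 * (rho ^ j / j) * Z + 63 * rho ^ j / j * Z := by
        rw [← Finset.sum_mul]
        have := sum_Pp' j hj N
        gcongr
    _ ≤ _ := by
        have : 0 ≤ rho ^ j / j := by positivity
        rw [mul_div_assoc]
        nlinarith

lemma prof_cont : Continuous prof := by
  unfold prof
  refine Continuous.pow (Continuous.inv₀ (by fun_prop) ?_) 3
  intro u
  positivity

lemma prof_integrable : MeasureTheory.Integrable prof := by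
  have h := integrable_rpow_neg_one_add_norm_sq (E := ℝ) (μ := MeasureTheory.volume) (r := 3 / 2) (by simp; norm_num)
  refine h.congr (Filter.Eventually.of_forall ?_)
  intro u
  simp only [prof, Real.norm_eq_abs, sq_abs]
  have hp : 0 < 1 + u ^ 2 := by positivity
  generalize 1 + u ^ 2 = w at hp ⊢
  rw [inv_pow, Real.sqrt_eq_rpow, Real.sqrt_eq_rpow, ← Real.rpow_mul hp.le, ← Real.rpow_natCast, ← Real.rpow_mul hp.le,
    ← Real.rpow_neg hp.le]
  norm_num

lemma prof_int_bound (A b : ℝ) (hA : 0 < A) :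
    ∫ t in (0 : ℝ)..1, prof ((t - b) * A) ≤ A⁻¹ * ∫ u, prof u := by
  have h1 : ∫ t : ℝ, prof ((t - b) * A) = A⁻¹ * ∫ u, prof u := by
    rw [MeasureTheory.integral_sub_right_eq_self (fun t => prof (t * A)) b,
      MeasureTheory.Measure.integral_comp_mul_right, abs_of_pos (by positivity), smul_eq_mul]
  have h_integ : MeasureTheory.Integrable (fun t => prof ((t - b) * A)) := by
    have := (prof_integrable.comp_mul_right' hA.ne')
    exact this.comp_sub_right b
  rw [← h1, intervalIntegral.integral_of_le zero_le_one]
  exact MeasureTheory.setIntegral_le_integral h_integ (Filter.Eventually.of_forall fun t => (prof_pos _).le)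

lemma Mfun_cont (k j : ℕ) : Continuous (Mfun k j) := by
  unfold Mfun
  refine continuous_finsetSum _ fun q _ => continuous_finsetSum _ fun a _ => ?_
  exact continuous_const.mul (prof_cont.comp (by fun_prop))

lemma Mfun_pos (k j : ℕ) (t : ℝ) : 0 < Mfun k j t := by
  unfold Mfun
  have h : ∀ q ∈ Finset.Icc 1 (2 ^ k), ∀ a : ℕ, 0 < gam j q * ((Real.sqrt q)⁻¹) ^ 5 * prof ((t - a / q) * 4 ^ k) := by
    intro q hq a
    have h1 := gam_pos j q
    have h2 := prof_pos ((t - a / q) * 4 ^ k)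
    have : (0 : ℝ) < q := by exact_mod_cast (Finset.mem_Icc.1 hq).1
    positivity
  refine Finset.sum_pos (fun q hq => Finset.sum_pos (fun a _ => h q hq a) ⟨0, by simp⟩) ⟨1, ?_⟩
  rw [Finset.mem_Icc]
  exact ⟨le_rfl, Nat.one_le_two_pow⟩

lemma int_M : ∃ C : ℝ, 0 < C ∧ ∀ k j : ℕ, 1 ≤ j →
    ∫ t in (0 : ℝ)..1, Mfun k j t ≤ C * (4 ^ k)⁻¹ * (rho ^ j / j) := by
  obtain ⟨C, hC, hCb⟩ := sum_gam
  set I := ∫ u, prof u with hI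
  have hI0 : 0 ≤ I := MeasureTheory.integral_nonneg fun u => (prof_pos u).le
  refine ⟨2 * I * C + 1, by positivity, ?_⟩
  intro k j hj
  have hr := rho_pos
  unfold Mfun
  rw [intervalIntegral.integral_finsetSum]
  swap
  · intro q _
    apply Continuous.intervalIntegrable
    refine continuous_finsetSum _ fun a _ => ?_
    exact continuous_const.mul (prof_cont.comp (by fun_prop))
  have hq : ∀ q ∈ Finset.Icc 1 (2 ^ k), ∫ t in (0 : ℝ)..1, ∑ a ∈ Finset.range (q + 1),
      gam j q * ((Real.sqrt q)⁻¹) ^ 5 * prof ((t - a / q) * 4 ^ k) ≤ 2 * I * (4 ^ k)⁻¹ * (gam j q * s32 q) := by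
    intro q hq
    have hq1 : 1 ≤ q := (Finset.mem_Icc.1 hq).1
    have hqR : (1 : ℝ) ≤ q := by exact_mod_cast hq1
    rw [intervalIntegral.integral_finsetSum]
    swap
    · intro a _
      apply Continuous.intervalIntegrable
      exact continuous_const.mul (prof_cont.comp (by fun_prop))
    have hg := gam_pos j q
    have ha : ∀ a ∈ Finset.range (q + 1), ∫ t in (0 : ℝ)..1,
        gam j q * ((Real.sqrt q)⁻¹) ^ 5 * prof ((t - a / q) * 4 ^ k) ≤
        gam j q * ((Real.sqrt q)⁻¹) ^ 5 * ((4 ^ k)⁻¹ * I) := by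
      intro a _
      rw [intervalIntegral.integral_const_mul]
      have := prof_int_bound (4 ^ k) (a / q) (by positivity)
      gcongr
    refine (Finset.sum_le_card_nsmul _ _ _ ha).trans ?_
    rw [Finset.card_range, nsmul_eq_mul]
    push_cast
    have hs : (q : ℝ) * ((Real.sqrt q)⁻¹) ^ 5 = s32 q := by
      unfold s32
      have h0 : Real.sqrt q ≠ 0 := (Real.sqrt_pos.2 (by linarith)).ne'
      nth_rewrite 1 [← Real.sq_sqrt (show (0 : ℝ) ≤ q by linarith)]
      field_simp
    rw [← hs]
    have : ((q : ℝ) + 1) ≤ 2 * q := by linarith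
    calc _ ≤ (2 * (q : ℝ)) * (gam j q * ((Real.sqrt q)⁻¹) ^ 5 * ((4 ^ k)⁻¹ * I)) := by gcongr
      _ = _ := by ring
  refine (Finset.sum_le_sum hq).trans ?_
  rw [← Finset.mul_sum]
  have := hCb j (2 ^ k) hj
  calc _ ≤ 2 * I * (4 ^ k)⁻¹ * (C * (rho ^ j / j)) := by gcongr
    _ ≤ _ := by
      have : 0 ≤ (4 ^ k : ℝ)⁻¹ * (rho ^ j / j) := by positivity
      nlinarith

/-- weighted Cauchy-Schwarz replacement of Minkowski -/
lemma mink {ι : Type*} [Countable ι] (μ : MeasureTheory.Measure ℝ) (T : ι → ℝ → ℝ≥0∞) (M : ℝ → ℝ≥0∞) (S : ℝ≥0∞)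
    (hT : ∀ n, Measurable (T n)) (hM : Measurable M) (hM0 : ∀ t, M t ≠ 0) (hMt : ∀ t, M t ≠ ⊤)
    (h : ∀ᵐ t ∂μ, ∑' n, T n t ^ 2 ≤ M t ^ 2 * S) :
    ∑' n, (∫⁻ t, T n t ∂μ) ^ 2 ≤ (∫⁻ t, M t ∂μ) ^ 2 * S := by
  have hn : ∀ n, (∫⁻ t, T n t ∂μ) ^ 2 ≤ (∫⁻ t, M t ∂μ) * ∫⁻ t, T n t ^ 2 / M t ∂μ := by
    intro n
    have hcs := ENNReal.lintegral_mul_le_Lp_mul_Lq μ (p := 2) (q := 2) (by constructor <;> norm_num)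
      (f := fun t => M t ^ (1 / 2 : ℝ)) (g := fun t => T n t / M t ^ (1 / 2 : ℝ))
      (by fun_prop) (by fun_prop)
    have e1 : ∀ t, ((fun t => M t ^ (1 / 2 : ℝ)) * (fun t => T n t / M t ^ (1 / 2 : ℝ))) t = T n t := by
      intro t
      simp only [Pi.mul_apply]
      rw [ENNReal.mul_div_cancel]
      · simp [hM0 t]
      · simp [hMt t]
    have e2 : ∀ t, (M t ^ (1 / 2 : ℝ)) ^ (2 : ℝ) = M t := by
      intro t
      rw [← ENNReal.rpow_mul]; norm_num
    have e3 : ∀ t, (T n t / M t ^ (1 / 2 : ℝ)) ^ (2 : ℝ) = T n t ^ 2 / M t := by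
      intro t
      rw [ENNReal.div_rpow_of_nonneg _ _ (by norm_num), e2]
      norm_num
    simp only [e1, e2, e3] at hcs
    calc (∫⁻ t, T n t ∂μ) ^ 2 ≤ ((∫⁻ t, M t ∂μ) ^ (1 / 2 : ℝ) * (∫⁻ t, T n t ^ 2 / M t ∂μ) ^ (1 / 2 : ℝ)) ^ 2 := by
          gcongr
      _ = _ := by
          rw [mul_pow, ← ENNReal.rpow_natCast, ← ENNReal.rpow_mul, ← ENNReal.rpow_natCast, ← ENNReal.rpow_mul]
          norm_num
  calc _ ≤ ∑' n, (∫⁻ t, M t ∂μ) * ∫⁻ t, T n t ^ 2 / M t ∂μ := ENNReal.tsum_le_tsum hn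
    _ = (∫⁻ t, M t ∂μ) * ∫⁻ t, ∑' n, T n t ^ 2 / M t ∂μ := by
        rw [ENNReal.tsum_mul_left, MeasureTheory.lintegral_tsum]
        intro n
        exact (((hT n).pow_const 2).div hM).aemeasurable
    _ ≤ (∫⁻ t, M t ∂μ) * ∫⁻ t, M t * S ∂μ := by
        gcongr 1
        apply MeasureTheory.lintegral_mono_ae
        filter_upwards [h] with t ht
        simp only [ENNReal.div_eq_inv_mul]
        rw [ENNReal.tsum_mul_left]
        calc _ ≤ (M t)⁻¹ * (M t ^ 2 * S) := by gcongr
          _ = ((M t)⁻¹ * M t) * (M t * S) := by ring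
          _ = _ := by rw [ENNReal.inv_mul_cancel (hM0 t) (hMt t), one_mul]
    _ = _ := by
        rw [MeasureTheory.lintegral_mul_const _ hM]; ring

lemma int_char (D : ℤ) : ∫ t in (0 : ℝ)..1, Complex.exp (2 * π * Complex.I * D * t) = if D = 0 then 1 else 0 := by
  split_ifs with h
  · subst h; simp
  · have hc : (2 * π * Complex.I * D : ℂ) ≠ 0 := by
      simp [h, Real.pi_ne_zero]
    rw [integral_exp_mul_complex hc]
    have : Complex.exp (2 * π * Complex.I * D * (1 : ℝ)) = 1 := by
      rw [Complex.exp_eq_one_iff]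
      exact ⟨D, by push_cast; ring⟩
    rw [this]; simp

lemma wt_norm {d : ℕ} (k : ℕ) (t : ℝ) (m : Fin d → ℤ) :
    wt k t m = (Real.exp (-(2 * π) * (4 ^ k)⁻¹ * nsq m) : ℂ) * Complex.exp (2 * π * Complex.I * (∑ i, (m i) ^ 2 : ℤ) * t) := by
  unfold wt nsq
  rw [Complex.ofReal_exp, ← Complex.exp_add]
  congr 1
  push_cast
  ring

lemma nsq_nonneg {d : ℕ} (m : Fin d → ℤ) : 0 ≤ nsq m := Finset.sum_nonneg fun _ _ => sq_nonneg _

lemma nsq_cast {d : ℕ} (m : Fin d → ℤ) : nsq m = ((∑ i, (m i) ^ 2 : ℤ) : ℝ) := by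
  unfold nsq; push_cast; rfl

lemma norm_exp_two_pi (x : ℤ) (t : ℝ) : ‖Complex.exp (2 * π * Complex.I * x * t)‖ = 1 := by
  have : (2 * π * Complex.I * x * t : ℂ) = ((2 * π * x * t : ℝ) : ℂ) * Complex.I := by push_cast; ring
  rw [this, Complex.norm_exp_ofReal_mul_I]

lemma wt_norm_le {d : ℕ} (k : ℕ) (t : ℝ) (m : Fin d → ℤ) : ‖wt k t m‖ ≤ 1 := by
  rw [wt_norm, norm_mul, norm_exp_two_pi, mul_one, Complex.norm_real, Real.norm_eq_abs, Real.abs_exp, Real.exp_le_one_iff]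
  have := nsq_nonneg m
  have h : 0 ≤ (2 * π) * (4 ^ k : ℝ)⁻¹ * nsq m := by positivity
  linarith

lemma wt_cont {d : ℕ} (k : ℕ) (m : Fin d → ℤ) : Continuous (fun t => wt k t m) := by
  unfold wt; fun_prop

lemma T_cont {d : ℕ} (k : ℕ) {f : (Fin d → ℤ) → ℂ} (hf : Summable (fun n => ‖f n‖)) (n : Fin d → ℤ) :
    Continuous (fun t : ℝ => ∑' m, wt k t m * f (n - m)) := by
  have hs : Summable (fun m => ‖f (n - m)‖) := (Equiv.subLeft n).summable_iff.2 hf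
  refine continuous_tsum (fun m => (wt_cont k m).mul continuous_const) hs ?_
  intro m t
  rw [norm_mul]
  exact mul_le_of_le_one_left (norm_nonneg _) (wt_norm_le k t m)

lemma sphere_int {d : ℕ} (k l : ℕ) (lam : ℝ) (hl : (l : ℝ) = lam ^ 2) {f : (Fin d → ℤ) → ℂ}
    (hf : Summable (fun n => ‖f n‖)) (n : Fin d → ℤ) :
    ‖∑' m : sph d lam, f (n - m)‖ ≤ Real.exp (2 * π * (4 ^ k)⁻¹ * l) *
      ∫ t in (0 : ℝ)..1, ‖∑' m, wt k t m * f (n - m)‖ := by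
  classical
  have hs : Summable (fun m => ‖f (n - m)‖) := (Equiv.subLeft n).summable_iff.2 hf
  set G : (Fin d → ℤ) → ℝ → ℂ := fun m t => Complex.exp (2 * π * Complex.I * (-(l : ℤ) : ℤ) * t) * (wt k t m * f (n - m)) with hG
  have hGn : ∀ m t, ‖G m t‖ ≤ ‖f (n - m)‖ := by
    intro m t
    rw [hG]
    simp only
    rw [norm_mul, norm_exp_two_pi, one_mul, norm_mul]
    exact mul_le_of_le_one_left (norm_nonneg _) (wt_norm_le k t m)
  have hsum : ∀ t, Summable (fun m => wt k t m * f (n - m)) := by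
    intro t
    refine Summable.of_norm_bounded hs ?_
    intro m
    rw [norm_mul]
    exact mul_le_of_le_one_left (norm_nonneg _) (wt_norm_le k t m)
  have hH := intervalIntegral.hasSum_integral_of_dominated_convergence (μ := MeasureTheory.volume) (a := 0) (b := 1)
    (F := G) (f := fun t => Complex.exp (2 * π * Complex.I * (-(l : ℤ) : ℤ) * t) * ∑' m, wt k t m * f (n - m))
    (fun m _ => ‖f (n - m)‖)
    (by
      intro m
      apply Continuous.aestronglyMeasurable
      have := wt_cont k m
      rw [hG]; fun_prop)
    (by
      intro m
      exact Filter.Eventually.of_forall fun t _ => hGn m t)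
    (Filter.Eventually.of_forall fun t _ => hs)
    (by simp)
    (Filter.Eventually.of_forall fun t _ => (hsum t).hasSum.mul_left _)
  have h_integ : ∀ m, ∫ t in (0 : ℝ)..1, G m t =
      (Real.exp (-(2 * π * (4 ^ k)⁻¹ * l)) : ℂ) * (sph d lam).indicator (fun m => f (n - m)) m := by
    intro m
    have h1 : ∀ t : ℝ, G m t = (Real.exp (-(2 * π) * (4 ^ k)⁻¹ * nsq m) : ℂ) * f (n - m) *
        Complex.exp (2 * π * Complex.I * ((∑ i, (m i) ^ 2 - l : ℤ)) * t) := by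
      intro t
      have h2 : Complex.exp (2 * π * Complex.I * ((∑ i, (m i) ^ 2 - l : ℤ)) * t) =
        Complex.exp (2 * π * Complex.I * (-(l : ℤ) : ℤ) * t) * Complex.exp (2 * π * Complex.I * (∑ i, (m i) ^ 2 : ℤ) * t) := by
        rw [← Complex.exp_add]; congr 1; push_cast; ring
      rw [hG, h2]
      simp only
      rw [wt_norm]; ring
    rw [intervalIntegral.integral_congr (fun t _ => h1 t), intervalIntegral.integral_const_mul, int_char]
    have hiff : (∑ i, (m i) ^ 2 - (l : ℤ) = 0) ↔ m ∈ sph d lam := by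
      show _ ↔ nsq m = lam ^ 2
      rw [← hl, nsq_cast, sub_eq_zero]
      constructor
      · intro h; rw [h]; simp
      · intro h; exact_mod_cast h
    by_cases hm : m ∈ sph d lam
    · rw [if_pos (hiff.2 hm), Set.indicator_of_mem hm, mul_one]
      have : nsq m = l := by rw [hl]; exact hm
      rw [this]
      congr 3
      ring_nf
    · rw [if_neg (fun h => hm (hiff.1 h)), Set.indicator_of_notMem hm]; simp
  have heq := hH.tsum_eq
  simp only [h_integ] at heq
  rw [tsum_mul_left, ← tsum_subtype] at heq
  have hT := T_cont k hf n
  have hle : Real.exp (-(2 * π * (4 ^ k)⁻¹ * l)) * ‖∑' m : sph d lam, f (n - m)‖ ≤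
      ∫ t in (0 : ℝ)..1, ‖∑' m, wt k t m * f (n - m)‖ := by
    have h1 : Real.exp (-(2 * π * (4 ^ k)⁻¹ * l)) * ‖∑' m : sph d lam, f (n - m)‖ =
        ‖(Real.exp (-(2 * π * (4 ^ k)⁻¹ * l)) : ℂ) * ∑' m : sph d lam, f (n - m)‖ := by
      rw [norm_mul, Complex.norm_real, Real.norm_eq_abs, Real.abs_exp]
    rw [h1, heq]
    refine (intervalIntegral.norm_integral_le_integral_norm zero_le_one).trans (le_of_eq ?_)
    apply intervalIntegral.integral_congr
    intro t _
    simp only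
    rw [norm_mul, norm_exp_two_pi, one_mul]
  rw [Real.exp_neg, inv_mul_le_iff₀ (Real.exp_pos _)] at hle
  exact hle

lemma Nlam_eq {d : ℕ} (l : ℕ) (lam : ℝ) (hl : (l : ℝ) = lam ^ 2) : Nlam d lam = Nat.card (RR d l) := by
  unfold Nlam
  apply Nat.card_congr
  refine Equiv.subtypeEquivRight ?_
  intro m
  show nsq m = lam ^ 2 ↔ _
  rw [← hl, nsq_cast]
  constructor
  · intro h; exact_mod_cast h
  · intro h; rw [h]; simp

lemma enn_tsum_sq {ι : Type*} (g : ι → ℂ) (hg : Summable (fun n => ‖g n‖ ^ 2)) :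
    ∑' n, ‖g n‖ₑ ^ 2 = ENNReal.ofReal (∑' n, ‖g n‖ ^ 2) := by
  rw [ENNReal.ofReal_tsum_of_nonneg (fun n => by positivity) hg]
  apply tsum_congr
  intro n
  rw [ENNReal.ofReal_pow (norm_nonneg _), ofReal_norm_eq_enorm]

lemma rho_pow_eq (j : ℕ) : rho ^ j = (2 : ℝ) ^ (-(j : ℝ) / 2) := by
  unfold rho
  rw [Real.sqrt_eq_rpow, ← Real.rpow_neg (by norm_num), ← Real.rpow_natCast, ← Real.rpow_mul (by norm_num)]
  congr 1
  ring

lemma Avg_bound (d : ℕ) (hd : 5 ≤ d) : ∃ A : ℝ, 0 < A ∧ ∀ (k : ℕ) (lam : ℝ), (2 : ℝ) ^ k ≤ lam → lam ≤ (2 : ℝ) ^ (k + 1) →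
    (∃ N : ℕ, (N : ℝ) = lam ^ 2) → ∀ f : (Fin d → ℤ) → ℝ, Summable (fun n => ‖(f n : ℂ)‖) → ∀ n,
    (‖Avg lam f n‖₊ : ℝ≥0∞) ≤ ENNReal.ofReal (A / (2 ^ k) ^ (d - 2)) *
      ∫⁻ t in Set.Ioc (0 : ℝ) 1, ‖∑' m, wt k t m * (f (n - m) : ℂ)‖ₑ := by
  obtain ⟨c, hc, hcb⟩ := RR_lower d hd
  refine ⟨Real.exp (8 * π) / c, by positivity, ?_⟩
  rintro k lam h1 h2 ⟨l, hl⟩ f hf n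
  have h4 : (4 : ℝ) ^ k = (2 ^ k) ^ 2 := by
    rw [← pow_mul, mul_comm, pow_mul]; norm_num
  have hN : (0 : ℝ) < 2 ^ k := by positivity
  have hlam : 0 < lam := hN.trans_le h1
  have hl4 : (4 : ℝ) ^ k ≤ l := by rw [hl, h4]; gcongr
  have hl5 : (l : ℝ) ≤ 4 * 4 ^ k := by
    have : lam ^ 2 ≤ (2 ^ (k + 1)) ^ 2 := by gcongr
    rw [hl, h4]
    refine this.trans (le_of_eq ?_)
    rw [pow_succ]; ring
  have hl1 : 1 ≤ l := by
    have : (1 : ℝ) ≤ l := le_trans (one_le_pow₀ (by norm_num)) hl4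
    exact_mod_cast this
  have hcard := hcb l hl1
  rw [← Nlam_eq l lam hl] at hcard
  have hpow : ((2 : ℝ) ^ k) ^ (d - 2) ≤ (l : ℝ) ^ (((d : ℝ) - 2) / 2) := by
    have hd2 : (0 : ℝ) ≤ ((d : ℝ) - 2) / 2 := by
      have : (5 : ℝ) ≤ d := by exact_mod_cast hd
      linarith
    refine le_trans (le_of_eq ?_) (Real.rpow_le_rpow (by positivity) hl4 hd2)
    rw [h4, ← Real.rpow_natCast, ← Real.rpow_natCast (2 ^ k) 2, ← Real.rpow_mul hN.le]
    congr 1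
    rw [Nat.cast_sub (by omega)]
    push_cast; ring
  have hNl : c * (2 ^ k) ^ (d - 2) ≤ (Nlam d lam : ℝ) := le_trans (by gcongr) hcard
  have hsph := sphere_int k l lam hl (f := fun n => (f n : ℂ)) hf n
  have hexp : Real.exp (2 * π * (4 ^ k)⁻¹ * l) ≤ Real.exp (8 * π) := by
    apply Real.exp_le_exp.2
    have : (4 ^ k : ℝ)⁻¹ * l ≤ 4 := by
      rw [inv_mul_le_iff₀ (by positivity)]; linarith
    nlinarith [Real.pi_pos]
  set I := ∫ t in (0 : ℝ)..1, ‖∑' m, wt k t m * (f (n - m) : ℂ)‖ with hI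
  have hI0 : 0 ≤ I := intervalIntegral.integral_nonneg zero_le_one fun _ _ => norm_nonneg _
  have hav : ‖Avg lam f n‖ ≤ Real.exp (8 * π) / c / (2 ^ k) ^ (d - 2) * I := by
    unfold Avg
    rw [norm_mul, norm_inv, Real.norm_natCast]
    have hn : ‖∑' m : sph d lam, f (n - m)‖ = ‖∑' m : sph d lam, (f (n - m) : ℂ)‖ := by
      rw [← Complex.ofReal_tsum, Complex.norm_real]
    rw [hn]
    calc _ ≤ (c * (2 ^ k) ^ (d - 2))⁻¹ * (Real.exp (8 * π) * I) := by
          have := hsph.trans (mul_le_mul_of_nonneg_right hexp hI0)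
          gcongr
      _ = _ := by field_simp
  have hcont := T_cont k (f := fun n => (f n : ℂ)) hf n
  have hIe : ENNReal.ofReal I = ∫⁻ t in Set.Ioc (0 : ℝ) 1, ‖∑' m, wt k t m * (f (n - m) : ℂ)‖ₑ := by
    rw [hI, intervalIntegral.integral_of_le zero_le_one, MeasureTheory.ofReal_integral_norm_eq_lintegral_enorm]
    exact (hcont.integrableOn_Icc (a := 0) (b := 1)).mono_set Set.Ioc_subset_Icc_self
  rw [← hIe, ← ENNReal.ofReal_mul (by positivity)]
  have : (‖Avg lam f n‖₊ : ℝ≥0∞) = ENNReal.ofReal ‖Avg lam f n‖ := (ofReal_norm_eq_enorm _).symm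
  rw [this]
  exact ENNReal.ofReal_le_ofReal hav

theorem single_scale_maximal_estimate (d : ℕ) (hd : 5 ≤ d) :
    ∃ C : ℝ, 0 < C ∧ ∀ (k j : ℕ), 1 ≤ j → (j : ℝ) ≤ Real.logb 2 (k : ℝ) - 2 →
      ∀ f : (Fin d → ℤ) → ℝ,
        (∀ α ∈ OmegaJK d j k,
          HasSum (fun n : Fin d → ℤ =>
            (f n : ℂ) * Complex.exp (-(2 * (π : ℂ) * Complex.I) * (∑ i, (n i : ℝ) * α i))) 0) →
        (∑' n : Fin d → ℤ,
            (⨆ (lam : ℝ) (_ : (2 : ℝ) ^ k ≤ lam ∧ lam ≤ (2 : ℝ) ^ (k + 1) ∧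
                ∃ N : ℕ, (N : ℝ) = lam ^ 2),
              (‖Avg lam f n‖₊ : ℝ≥0∞)) ^ 2) ^ ((1 : ℝ) / 2)
          ≤ ENNReal.ofReal (C * (2 : ℝ) ^ (-(j : ℝ) / 2) / (j : ℝ)) * l2norm f := by
  obtain ⟨A, hA, hAb⟩ := Avg_bound d hd
  obtain ⟨C1, hC1, hC1b⟩ := mult_bound d hd
  obtain ⟨C2, hC2, hC2b⟩ := int_M
  refine ⟨A * C1 * C2, by positivity, ?_⟩
  intro k j hj _ f hf
  have hjR : (0 : ℝ) < j := by exact_mod_cast hj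
  have hr := rho_pos
  have hf1 : Summable (fun n => ‖(f n : ℂ)‖) := by
    have h0 : (fun _ => 0 : Fin d → ℝ) ∈ OmegaJK d j k := ⟨fun _ => 0, fun i => by simp; positivity⟩
    have := (hf _ h0).summable.norm
    simpa using this
  have hf2 : Summable (fun n => ‖(f n : ℂ)‖ ^ 2) := by
    have h := (hf1.mul_of_nonneg hf1 (fun _ => norm_nonneg _) (fun _ => norm_nonneg _)).comp_injective
      (i := fun n : Fin d → ℤ => (n, n)) (fun x y h => by simpa using h)
    refine h.congr ?_
    intro n
    simp [sq]
  set S : ℝ≥0∞ := ∑' n : Fin d → ℤ, (‖f n‖₊ : ℝ≥0∞) ^ 2 with hS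
  have hSe : S = ENNReal.ofReal (∑' n, ‖(f n : ℂ)‖ ^ 2) := by
    rw [← enn_tsum_sq _ hf2, hS]
    apply tsum_congr
    intro n
    congr 1
    rw [← ofReal_norm_eq_enorm, Complex.norm_real, ofReal_norm_eq_enorm]
    rfl
  set T : (Fin d → ℤ) → ℝ → ℝ≥0∞ := fun n t => ‖∑' m, wt k t m * (f (n - m) : ℂ)‖ₑ with hT
  set MR : ℝ → ℝ := fun t => C1 * (2 ^ k) ^ d * Mfun k j t with hMR
  have hMRpos : ∀ t, 0 < MR t := fun t => by
    have := Mfun_pos k j t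
    rw [hMR]; positivity
  have hMRcont : Continuous MR := continuous_const.mul (Mfun_cont k j)
  have hmink := mink (MeasureTheory.volume.restrict (Set.Ioc (0 : ℝ) 1)) T (fun t => ENNReal.ofReal (MR t)) S
    (fun n => (T_cont k (f := fun n => (f n : ℂ)) hf1 n).enorm.measurable)
    (hMRcont.measurable.ennreal_ofReal)
    (fun t => by simpa using hMRpos t) (fun t => ENNReal.ofReal_ne_top)
    (by
      rw [MeasureTheory.ae_restrict_iff' measurableSet_Ioc]
      refine Filter.Eventually.of_forall fun t ht => ?_
      obtain ⟨p1, p2⟩ := plancherel_mult (w := fun m => wt k t m) (f := fun n => (f n : ℂ))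
        (wt_summable k t) hf1 (MR t) (hMRpos t).le (by
          intro α
          by_cases hα : α ∈ OmegaJK d j k
          · right
            exact (hf α hα).tsum_eq
          · left
            exact hC1b k j t ht.1.le ht.2 α hα)
      rw [hT]
      simp only
      rw [enn_tsum_sq _ p1, hSe, ← ENNReal.ofReal_pow (hMRpos t).le, ← ENNReal.ofReal_mul (by positivity)]
      exact ENNReal.ofReal_le_ofReal p2)
  have hMint : ∫⁻ t in Set.Ioc (0 : ℝ) 1, ENNReal.ofReal (MR t) ≤
      ENNReal.ofReal (C1 * (2 ^ k) ^ d * (C2 * (4 ^ k)⁻¹ * (rho ^ j / j))) := by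
    rw [← MeasureTheory.ofReal_integral_eq_lintegral_ofReal
      ((hMRcont.integrableOn_Icc (a := 0) (b := 1)).mono_set Set.Ioc_subset_Icc_self)
      (Filter.Eventually.of_forall fun t => (hMRpos t).le)]
    apply ENNReal.ofReal_le_ofReal
    rw [← intervalIntegral.integral_of_le zero_le_one, hMR, intervalIntegral.integral_const_mul]
    have := hC2b k j hj
    gcongr
  set X : ℝ := A * C1 * C2 * (2 : ℝ) ^ (-(j : ℝ) / 2) / (j : ℝ) with hX
  have hXe : ENNReal.ofReal (A / (2 ^ k) ^ (d - 2)) *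
      ENNReal.ofReal (C1 * (2 ^ k) ^ d * (C2 * (4 ^ k)⁻¹ * (rho ^ j / j))) = ENNReal.ofReal X := by
    rw [← ENNReal.ofReal_mul (by positivity)]
    congr 1
    rw [hX, ← rho_pow_eq]
    have h4 : (4 : ℝ) ^ k = (2 ^ k) ^ 2 := by
      rw [← pow_mul, mul_comm, pow_mul]; norm_num
    obtain ⟨e, rfl⟩ : ∃ e, d = e + 2 := ⟨d - 2, by omega⟩
    rw [h4, Nat.add_sub_cancel, pow_add]
    field_simp
  have hfinal : (∑' n : Fin d → ℤ,
            (⨆ (lam : ℝ) (_ : (2 : ℝ) ^ k ≤ lam ∧ lam ≤ (2 : ℝ) ^ (k + 1) ∧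
                ∃ N : ℕ, (N : ℝ) = lam ^ 2),
              (‖Avg lam f n‖₊ : ℝ≥0∞)) ^ 2) ≤ (ENNReal.ofReal X) ^ 2 * S := by
    calc _ ≤ ∑' n, (ENNReal.ofReal (A / (2 ^ k) ^ (d - 2)) * ∫⁻ t in Set.Ioc (0 : ℝ) 1, T n t) ^ 2 := by
          refine ENNReal.tsum_le_tsum fun n => ?_
          gcongr
          refine iSup₂_le fun lam hlam => ?_
          exact hAb k lam hlam.1 hlam.2.1 hlam.2.2 f hf1 n
      _ = ENNReal.ofReal (A / (2 ^ k) ^ (d - 2)) ^ 2 * ∑' n, (∫⁻ t in Set.Ioc (0 : ℝ) 1, T n t) ^ 2 := by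
          simp only [mul_pow]
          rw [ENNReal.tsum_mul_left]
      _ ≤ ENNReal.ofReal (A / (2 ^ k) ^ (d - 2)) ^ 2 *
          ((ENNReal.ofReal (C1 * (2 ^ k) ^ d * (C2 * (4 ^ k)⁻¹ * (rho ^ j / j)))) ^ 2 * S) := by
          gcongr
          refine hmink.trans ?_
          gcongr
      _ = _ := by rw [← hXe]; ring
  calc _ ≤ ((ENNReal.ofReal X) ^ 2 * S) ^ ((1 : ℝ) / 2) := by gcongr
    _ = _ := by
      rw [ENNReal.mul_rpow_of_nonneg _ _ (by norm_num), ← ENNReal.rpow_natCast, ← ENNReal.rpow_mul]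
      norm_num [l2norm, hS]
end
end

section
/- Let $d\ge 1$, $k\in\mathbb{N}$, and set $\varepsilon=2^{-2k}$. For $t\in\mathbb{R}$ define $s_t:\mathbb{Z}^d\to\mathbb{C}$ by $s_t(m)=e^{2\pi i|m|^2(t+i\varepsilon)}$ and let $\widehat{s_t}(\alpha)=\sum_{m\in\mathbb{Z}^d}s_t(m)e^{-2\pi i m\cdot\alpha}$. There is a constant $C_d$ such that: if $1\le a\le q\le 2^k$ with $\gcd(a,q)=1$, $t=a/q+\tau$ with $|\tau|\le 2^{-k}q^{-1}$, then for every $\alpha\in\mathbb{R}^d$, $|\widehat{s_t}(\alpha)|\le C_d\, q^{-d/2}(\varepsilon+|\tau|)^{-d/2}\sum_{\ell\in\mathbb{Z}^d}e^{-\frac{\pi}{2}|\alpha-\ell/q|^2/(\varepsilon+\varepsilon^{-1}|\tau|^2)}$. -/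
open scoped BigOperators Real

noncomputable section

/-- `s_t(m) = e^{2πi|m|²(t+iε)}`. -/
def sFun {d : ℕ} (ε t : ℝ) (m : Fin d → ℤ) : ℂ :=
  Complex.exp (2 * (π : ℂ) * Complex.I * (nsq m : ℝ) * ((t : ℂ) + Complex.I * (ε : ℝ)))

/-- The Fourier transform `ŝ_t(α) = ∑_m s_t(m) e^{-2πi m·α}`. -/
def sHat {d : ℕ} (ε t : ℝ) (α : Fin d → ℝ) : ℂ :=
  ∑' m : Fin d → ℤ,
    sFun ε t m * Complex.exp (-(2 * (π : ℂ) * Complex.I) * (∑ i, (m i : ℝ) * α i))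


open Complex in
lemma aux_summable {A : ℂ} (hA : 0 < A.re) (b : ℂ) :
    Summable (fun n : ℤ => cexp (-π * A * n ^ 2 + 2 * π * b * n)) := by
  have h := (summable_jacobiTheta₂_term_iff (-I * b) (I * A)).2 (by simpa using hA)
  refine h.congr fun n => ?_
  unfold jacobiTheta₂_term
  congr 1
  linear_combination (2 * π * n * b - π * n ^ 2 * A) * (-I_sq)

lemma aux_tsum_pi {R : Type*} [NormedCommRing R] [CompleteSpace R] [NormOneClass R] :
    ∀ (d : ℕ) (f : Fin d → ℤ → R), (∀ i, Summable fun n => ‖f i n‖) →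
      (Summable fun m : Fin d → ℤ => ‖∏ i, f i (m i)‖) ∧
      ∑' m : Fin d → ℤ, ∏ i, f i (m i) = ∏ i, ∑' n : ℤ, f i n := by
  intro d
  induction d with
  | zero =>
    intro f hf
    refine ⟨Summable.of_finite, ?_⟩
    simp
  | succ d ih =>
    intro f hf
    obtain ⟨h1, h2⟩ := ih (fun i => f i.succ) (fun i => hf i.succ)
    have hs := (hf 0).mul_norm h1
    have e := Fin.consEquiv (fun _ : Fin (d+1) => ℤ)
    constructor
    · rw [← (Fin.consEquiv (fun _ : Fin (d+1) => ℤ)).summable_iff]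
      refine hs.congr fun x => ?_
      simp [Fin.prod_univ_succ, Fin.consEquiv]
    · rw [← (Fin.consEquiv (fun _ : Fin (d+1) => ℤ)).tsum_eq, Fin.prod_univ_succ, ← h2,
        tsum_mul_tsum_of_summable_norm (hf 0) h1]
      refine tsum_congr fun x => ?_
      simp [Fin.prod_univ_succ, Fin.consEquiv]

lemma aux_gauss (q : ℕ) [NeZero q] (a n : ZMod q) (ha : IsUnit a) :
    ‖∑ r : ZMod q, ZMod.stdAddChar (a * r ^ 2 + n * r)‖ ≤ Real.sqrt (2 * q) := by
  apply Real.le_sqrt_of_sq_le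
  have hstar : ∀ x : ZMod q, (starRingEnd ℂ) (ZMod.stdAddChar x) = ZMod.stdAddChar (-x) := by
    intro x
    rw [AddChar.map_neg_eq_conj]
  have key : (∑ r : ZMod q, ZMod.stdAddChar (a * r ^ 2 + n * r)) *
      (starRingEnd ℂ) (∑ r : ZMod q, ZMod.stdAddChar (a * r ^ 2 + n * r)) =
      ∑ h : ZMod q, ZMod.stdAddChar (a * h ^ 2 + n * h) *
        (if 2 * a * h = 0 then (q : ℂ) else 0) := by
    rw [map_sum, Finset.sum_mul_sum, Finset.sum_comm]
    simp_rw [hstar, ← AddChar.map_add_eq_mul]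
    have : ∀ s : ZMod q, ∑ r : ZMod q,
        ZMod.stdAddChar (a * r ^ 2 + n * r + -(a * s ^ 2 + n * s)) =
        ∑ h : ZMod q, ZMod.stdAddChar (a * h ^ 2 + n * h) *
          ZMod.stdAddChar (s * (2 * a * h)) := by
      intro s
      rw [← Equiv.sum_comp (Equiv.addRight s)]
      refine Finset.sum_congr rfl fun h _ => ?_
      rw [← AddChar.map_add_eq_mul]
      congr 1
      simp only [Equiv.coe_addRight]
      ring
    simp_rw [this]
    rw [Finset.sum_comm]
    refine Finset.sum_congr rfl fun h _ => ?_
    rw [← Finset.mul_sum, AddChar.sum_mulShift _ (ZMod.isPrimitive_stdAddChar q)]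
    simp [ZMod.card]
  have hn : ‖∑ r : ZMod q, ZMod.stdAddChar (a * r ^ 2 + n * r)‖ ^ 2 =
      ‖(∑ r : ZMod q, ZMod.stdAddChar (a * r ^ 2 + n * r)) *
      (starRingEnd ℂ) (∑ r : ZMod q, ZMod.stdAddChar (a * r ^ 2 + n * r))‖ := by
    rw [norm_mul, RCLike.norm_conj, sq]
  rw [hn, key]
  refine (norm_sum_le _ _).trans ?_
  have hb : ∀ h : ZMod q, ‖ZMod.stdAddChar (a * h ^ 2 + n * h) *
        (if 2 * a * h = 0 then (q : ℂ) else 0)‖ = if 2 • h = 0 then (q : ℝ) else 0 := by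
    intro h
    have h1 : 2 * a * h = 0 ↔ 2 • h = 0 := by
      rw [show 2 * a * h = a * (2 • h) by simp; ring, ha.mul_right_eq_zero]
    rw [norm_mul, AddChar.norm_apply, one_mul]
    simp only [h1]
    split_ifs <;> simp
  simp_rw [hb]
  rw [← Finset.sum_filter, Finset.sum_const, nsmul_eq_mul]
  have := IsAddCyclic.card_nsmul_eq_zero_le (α := ZMod q) (n := 2) two_pos
  gcongr
  exact_mod_cast this
open Complex in
lemma aux_one_dim (q : ℕ) (hq : 0 < q) (a : ℕ) (hc : Nat.Coprime a q) (ε τ α : ℝ) (hε : 0 < ε) :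
    ‖∑' m : ℤ, cexp (2 * π * I * (m : ℂ) ^ 2 * (((a : ℝ) / q + τ : ℝ) + I * ε)) *
      cexp (-(2 * π * I) * (m * α))‖ ≤
    2 * ((q : ℝ) ^ (-(1 : ℝ) / 2) * (ε + |τ|) ^ (-(1 : ℝ) / 2)) *
      ∑' l : ℤ, Real.exp (-(π / 2) * (α - l / q) ^ 2 / (ε + ε⁻¹ * τ ^ 2)) := by
  have : NeZero q := ⟨hq.ne'⟩
  have hq0 : (q : ℂ) ≠ 0 := by exact_mod_cast hq.ne'
  have hqR : (0 : ℝ) < q := by exact_mod_cast hq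
  set c : ℂ := ε - I * τ with hcdef
  have hcre : c.re = ε := by simp [hcdef]
  have hcim : c.im = -τ := by simp [hcdef]
  have hc0 : c ≠ 0 := fun h => by rw [h] at hcre; simp at hcre; linarith
  set A : ℂ := 2 * c * q ^ 2 with hA
  have hA' : A = ((2 * q ^ 2 : ℝ) : ℂ) * c := by rw [hA]; push_cast; ring
  have hAre : 0 < A.re := by
    rw [hA', re_ofReal_mul, hcre]; positivity
  have hA0 : A ≠ 0 := fun h => by rw [h] at hAre; simp at hAre
  set F : ℤ → ℂ := fun m => cexp (2 * π * I * (m : ℂ) ^ 2 * (((a : ℝ) / q + τ : ℝ) + I * ε)) *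
      cexp (-(2 * π * I) * (m * α)) with hF
  -- the unimodular factor
  have hsplit : ∀ (r n : ℤ), F (n * q + r) =
      ZMod.stdAddChar ((a : ZMod q) * (r : ZMod q) ^ 2) *
      (cexp (-2 * π * c * r ^ 2 - 2 * π * I * r * α) *
       cexp (-π * A * n ^ 2 + 2 * π * (-2 * c * q * r - I * q * α) * n)) := by
    intro r n
    have : (a : ZMod q) * (r : ZMod q) ^ 2 = (((a : ℤ) * r ^ 2 : ℤ) : ZMod q) := by push_cast; rfl
    rw [this, ZMod.stdAddChar_coe, hF]
    simp only
    rw [← Complex.exp_add, ← Complex.exp_add, ← Complex.exp_add, Complex.exp_eq_exp_iff_exists_int]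
    refine ⟨a * n ^ 2 * q + 2 * a * n * r, ?_⟩
    rw [hA, hcdef]
    push_cast
    field_simp
    ring_nf
    simp only [I_sq]
    ring
  have hpois : ∀ r : ℤ, ∑' n : ℤ, F (n * q + r) =
      1 / A ^ (1 / 2 : ℂ) * ∑' n : ℤ, cexp (-π / A * (n + q * α) ^ 2) *
        ZMod.stdAddChar ((a : ZMod q) * (r : ZMod q) ^ 2 + (n : ZMod q) * (r : ZMod q)) := by
    intro r
    simp_rw [hsplit r]
    rw [tsum_mul_left, tsum_mul_left, Complex.tsum_exp_neg_quadratic hAre]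
    rw [mul_left_comm _ (1 / _), mul_left_comm _ (1 / _)]
    congr 1
    rw [← tsum_mul_left, ← tsum_mul_left]
    refine tsum_congr fun n => ?_
    rw [AddChar.map_add_eq_mul, mul_left_comm (cexp _)]
    congr 1
    have : (n : ZMod q) * (r : ZMod q) = ((n * r : ℤ) : ZMod q) := by push_cast; rfl
    rw [this, ZMod.stdAddChar_coe, ← Complex.exp_add, ← Complex.exp_add]
    congr 1
    rw [hA]
    push_cast
    field_simp
    ring_nf
    simp only [I_sq, I_pow_three, I_pow_four]
    ring
  have hG : ∀ n : ℤ, ‖cexp (-π / A * (n + q * α) ^ 2)‖ =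
      Real.exp (-(π / 2) * (α - (-n : ℤ) / q) ^ 2 / (ε + ε⁻¹ * τ ^ 2)) := by
    intro n
    rw [Complex.norm_exp]
    congr 1
    have h1 : -π / A * (n + q * α) ^ 2 = ((-(π / 2) * (α - (-n : ℤ) / q) ^ 2 : ℝ) : ℂ) * c⁻¹ := by
      rw [hA]; push_cast; field_simp; ring
    have hne : ε ^ 2 + τ ^ 2 ≠ 0 := by positivity
    have hne' : ε + ε⁻¹ * τ ^ 2 ≠ 0 := by positivity
    rw [h1, re_ofReal_mul, inv_re, hcre, normSq_apply, hcre, hcim, mul_div_assoc _ _ (ε + _)]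
    rw [mul_assoc, ← mul_div_assoc]
    have h5 : ε / (ε * ε + -τ * -τ) = 1 / (ε + ε⁻¹ * τ ^ 2) := by
      rw [div_eq_div_iff (by nlinarith) hne']
      field_simp
    rw [mul_div_assoc, h5]
    ring
  have hGsum : Summable (fun n : ℤ => cexp (-π / A * (n + q * α) ^ 2)) := by
    have hinv : 0 < (1 / A).re := by
      rw [one_div, inv_re]; exact div_pos hAre (normSq_pos.2 hA0)
    refine ((aux_summable hinv (-(1 / A) * q * α)).mul_left
      (cexp (-π / A * (q * α) ^ 2))).congr fun n => ?_
    rw [← Complex.exp_add]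
    congr 1
    ring
  have hFsum : Summable F := by
    have h2c : 0 < (2 * (ε : ℂ) - 2 * I * ((a : ℝ) / q + τ : ℝ)).re := by simp; exact hε
    refine (aux_summable h2c (-I * α)).congr fun n => ?_
    rw [hF]
    simp only
    rw [← Complex.exp_add]
    congr 1
    ring_nf
    simp only [I_sq]
    ring
  have hmain : ∑' m, F m = 1 / A ^ (1 / 2 : ℂ) * ∑' n : ℤ, cexp (-π / A * (n + q * α) ^ 2) *
      ∑ r : ZMod q, ZMod.stdAddChar ((a : ZMod q) * r ^ 2 + (n : ZMod q) * r) := by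
    rw [← ((Equiv.prodComm _ _).trans (Int.divModEquiv q).symm).tsum_eq F]
    have hs2 := (((Equiv.prodComm (Fin q) ℤ).trans (Int.divModEquiv q).symm).summable_iff
      (f := F)).2 hFsum
    have h1 := hs2.tsum_prod
    simp only [Function.comp_def] at h1
    rw [h1, tsum_fintype]
    have h2 : ∀ r : Fin q, ∑' n : ℤ,
        F (((Equiv.prodComm (Fin q) ℤ).trans (Int.divModEquiv q).symm) (r, n)) =
        1 / A ^ (1 / 2 : ℂ) * ∑' n : ℤ, cexp (-π / A * (n + q * α) ^ 2) *
        ZMod.stdAddChar ((a : ZMod q) * (ZMod.finEquiv q r) ^ 2 +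
          (n : ZMod q) * (ZMod.finEquiv q r)) := by
      intro r
      have h3 : ZMod.finEquiv q r = (((r : ℕ) : ℤ) : ZMod q) := by
        rw [Int.cast_natCast]
        obtain _ | q := q
        · exact absurd rfl hq.ne'
        · exact (Fin.cast_val_eq_self r).symm
      rw [h3, ← hpois]
      rfl
    simp_rw [h2]
    rw [← Finset.mul_sum]
    have h6 := (ZMod.finEquiv q).toEquiv.sum_comp (fun r : ZMod q =>
      ∑' n : ℤ, cexp (-π / A * (n + q * α) ^ 2) *
        ZMod.stdAddChar ((a : ZMod q) * r ^ 2 + (n : ZMod q) * r))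
    refine (congrArg _ h6).trans ?_
    congr 1
    rw [← Summable.tsum_finsetSum]
    · simp_rw [Finset.mul_sum]
    · intro r _
      refine Summable.of_norm (hGsum.norm.congr fun n => ?_)
      rw [norm_mul, AddChar.norm_apply, mul_one]
  have hu : IsUnit (a : ZMod q) := (ZMod.isUnit_iff_coprime a q).2 hc
  rw [hmain, norm_mul]
  have hB : ‖∑' n : ℤ, cexp (-π / A * (n + q * α) ^ 2) *
      ∑ r : ZMod q, ZMod.stdAddChar ((a : ZMod q) * r ^ 2 + (n : ZMod q) * r)‖ ≤
      (∑' l : ℤ, Real.exp (-(π / 2) * (α - l / q) ^ 2 / (ε + ε⁻¹ * τ ^ 2))) *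
        Real.sqrt (2 * q) := by
    rw [← (Equiv.neg ℤ).tsum_eq
      (fun l : ℤ => Real.exp (-(π / 2) * (α - l / q) ^ 2 / (ε + ε⁻¹ * τ ^ 2))), ← tsum_mul_right]
    refine tsum_of_norm_bounded (Summable.hasSum ?_) fun n => ?_
    · refine Summable.mul_right _ (hGsum.norm.congr fun n => ?_)
      rw [hG]; rfl
    · rw [norm_mul, hG]
      exact mul_le_mul_of_nonneg_left (aux_gauss q a n hu) (Real.exp_pos _).le
  have hAn : ‖1 / A ^ (1 / 2 : ℂ)‖ ≤ (q : ℝ)⁻¹ * (ε + |τ|) ^ (-(1 : ℝ) / 2) := by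
    have hx : 0 < ε + |τ| := by positivity
    have h0 : ‖A ^ (1 / 2 : ℂ)‖ = ‖A‖ ^ (1 / 2 : ℝ) := by
      rw [← Complex.norm_cpow_real]; norm_num
    have h1 : (q : ℝ) ^ 2 * (ε + |τ|) ≤ ‖A‖ := by
      rw [hA', norm_mul, Complex.norm_real, Real.norm_of_nonneg (by positivity)]
      have e1 := Complex.abs_re_le_norm c
      have e2 := Complex.abs_im_le_norm c
      rw [hcre, abs_of_pos hε] at e1
      rw [hcim, abs_neg] at e2
      nlinarith [sq_pos_of_pos hqR]
    have h2 : (q : ℝ) * (ε + |τ|) ^ (1 / 2 : ℝ) ≤ ‖A‖ ^ (1 / 2 : ℝ) := by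
      refine le_trans (le_of_eq ?_) (Real.rpow_le_rpow (by positivity) h1 (by norm_num))
      rw [Real.mul_rpow (by positivity) hx.le, ← Real.sqrt_eq_rpow ((q : ℝ) ^ 2),
        Real.sqrt_sq hqR.le]
    rw [norm_div, norm_one, h0, neg_div, Real.rpow_neg hx.le, ← mul_inv, one_div]
    exact inv_anti₀ (by positivity) h2
  calc _ ≤ ((q : ℝ)⁻¹ * (ε + |τ|) ^ (-(1 : ℝ) / 2)) *
      ((∑' l : ℤ, Real.exp (-(π / 2) * (α - l / q) ^ 2 / (ε + ε⁻¹ * τ ^ 2))) *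
        Real.sqrt (2 * q)) := by gcongr
    _ = (Real.sqrt 2 * ((q : ℝ)⁻¹ * Real.sqrt q * (ε + |τ|) ^ (-(1 : ℝ) / 2))) *
      (∑' l : ℤ, Real.exp (-(π / 2) * (α - l / q) ^ 2 / (ε + ε⁻¹ * τ ^ 2))) := by
        rw [Real.sqrt_mul (by norm_num)]; ring
    _ ≤ _ := by
      have h1 : (q : ℝ)⁻¹ * Real.sqrt q = (q : ℝ) ^ (-(1 : ℝ) / 2) := by
        rw [Real.sqrt_eq_rpow, ← Real.rpow_neg_one, ← Real.rpow_add hqR]; norm_num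
      rw [h1]
      have h2 : Real.sqrt 2 ≤ 2 := by
        rw [Real.sqrt_le_left (by norm_num)]; norm_num
      have h3 : 0 ≤ ∑' l : ℤ, Real.exp (-(π / 2) * (α - l / q) ^ 2 / (ε + ε⁻¹ * τ ^ 2)) :=
        tsum_nonneg fun _ => (Real.exp_pos _).le
      gcongr

theorem gauss_sum_estimate (d : ℕ) (hd : 1 ≤ d) :
    ∃ C : ℝ, 0 < C ∧ ∀ (k : ℕ) (a q : ℕ) (τ : ℝ) (α : Fin d → ℝ),
      1 ≤ a → a ≤ q → q ≤ 2 ^ k → Nat.Coprime a q →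
      |τ| ≤ (2 : ℝ) ^ (-(k : ℤ)) / q →
      ‖sHat (d := d) (((2 : ℝ) ^ (2 * k))⁻¹) ((a : ℝ) / q + τ) α‖ ≤
        C * (q : ℝ) ^ (-(d : ℝ) / 2) * (((2 : ℝ) ^ (2 * k))⁻¹ + |τ|) ^ (-(d : ℝ) / 2) *
          ∑' ℓ : Fin d → ℤ,
            Real.exp (-(π / 2) * (∑ i, (α i - (ℓ i : ℝ) / q) ^ 2) /
              (((2 : ℝ) ^ (2 * k))⁻¹ + ((2 : ℝ) ^ (2 * k)) * τ ^ 2)) := by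
  refine ⟨2 ^ d, by positivity, ?_⟩
  intro k a q τ α ha haq _ hc _
  have hq : 0 < q := by omega
  have hqR : (0 : ℝ) < q := by exact_mod_cast hq
  obtain ⟨ε, hε'⟩ : ∃ ε : ℝ, ε = ((2 : ℝ) ^ (2 * k))⁻¹ := ⟨_, rfl⟩
  have hε : 0 < ε := by rw [hε']; positivity
  have hinv : (2 : ℝ) ^ (2 * k) = ε⁻¹ := by rw [hε', inv_inv]
  rw [hinv, inv_inv]
  have hx : 0 < ε + |τ| := by positivity
  set D := ε + ε⁻¹ * τ ^ 2 with hD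
  have hDpos : 0 < D := by positivity
  -- factor the left-hand side
  have hL : sHat (d := d) ε ((a : ℝ) / q + τ) α = ∏ i : Fin d, ∑' m : ℤ,
      Complex.exp (2 * π * Complex.I * (m : ℂ) ^ 2 *
        (((a : ℝ) / q + τ : ℝ) + Complex.I * ε)) *
      Complex.exp (-(2 * π * Complex.I) * (m * α i)) := by
    rw [← (aux_tsum_pi d (fun i (m : ℤ) => Complex.exp (2 * π * Complex.I * (m : ℂ) ^ 2 *
        (((a : ℝ) / q + τ : ℝ) + Complex.I * ε)) *
      Complex.exp (-(2 * π * Complex.I) * (m * α i))) ?_).2]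
    · unfold sHat sFun nsq
      refine tsum_congr fun m => ?_
      rw [Finset.prod_mul_distrib, ← Complex.exp_sum, ← Complex.exp_sum, ← Finset.sum_mul,
        ← Finset.mul_sum, ← Finset.mul_sum]
      push_cast
      rfl
    · intro i
      have h2c : 0 < (2 * (ε : ℂ) - 2 * Complex.I * ((a : ℝ) / q + τ : ℝ)).re := by
        simp; exact hε
      refine ((aux_summable h2c (-Complex.I * α i)).norm).congr fun n => ?_
      congr 1
      rw [← Complex.exp_add]
      congr 1
      ring_nf
      simp only [Complex.I_sq]
      ring
  have hR : ∑' ℓ : Fin d → ℤ, Real.exp (-(π / 2) * (∑ i, (α i - (ℓ i : ℝ) / q) ^ 2) / D) =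
      ∏ i : Fin d, ∑' l : ℤ, Real.exp (-(π / 2) * (α i - l / q) ^ 2 / D) := by
    rw [← (aux_tsum_pi d (fun i (l : ℤ) => Real.exp (-(π / 2) * (α i - l / q) ^ 2 / D)) ?_).2]
    · refine tsum_congr fun m => ?_
      rw [← Real.exp_sum, Finset.mul_sum, Finset.sum_div]
    · intro i
      have hB : 0 < (((1 / (2 * D * q ^ 2) : ℝ)) : ℂ).re := by
        rw [Complex.ofReal_re]; positivity
      refine (((aux_summable hB ((α i / (2 * D * q) : ℝ))).norm).mul_left
        (Real.exp (-(π / 2) * (α i) ^ 2 / D))).congr fun n => ?_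
      rw [Complex.norm_exp, Real.norm_of_nonneg (Real.exp_pos _).le, ← Real.exp_add]
      congr 1
      have : (-(π : ℂ) * ((1 / (2 * D * q ^ 2) : ℝ) : ℂ) * (n : ℂ) ^ 2 +
          2 * π * ((α i / (2 * D * q) : ℝ) : ℂ) * n) =
          ((-π * (1 / (2 * D * q ^ 2)) * n ^ 2 + 2 * π * (α i / (2 * D * q)) * n : ℝ) : ℂ) := by
        push_cast; ring
      rw [this, Complex.ofReal_re]
      field_simp
      ring
  rw [hL, hR, norm_prod]
  refine (Finset.prod_le_prod (fun _ _ => norm_nonneg _)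
    (fun i _ => aux_one_dim q hq a hc ε τ (α i) hε)).trans (le_of_eq ?_)
  rw [Finset.prod_mul_distrib, Finset.prod_const, Finset.card_univ, Fintype.card_fin, mul_pow,
    mul_pow, ← Real.rpow_mul_natCast hqR.le, ← Real.rpow_mul_natCast hx.le,
    show -(1 : ℝ) / 2 * d = -(d : ℝ) / 2 by ring]
  ring
end
end
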